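/- arXiv:1802.02549 — 3 statements merged into one kernel-verified Lean document; each statement's English description precedes it below -/
import Mathlib

section
/- The relation of smooth homotopy on continuous dg algebra morphisms between dg Arens-Michael algebras is an equivalence relation (in particular, it is transitive). -/
open DirectSum

/-- A (cohomologically graded) differential graded algebra over a commutative ring `k`:
a `ℤ`-graded `k`-algebra equipped with a square-zero degree `+1` differential
satisfying the graded Leibniz rule. -/
structure DGA (k : Type) [CommRing k] : Type 1 where
  A : Type
  [ringA : Ring A]
  [algA : Algebra k A]
  gr : ℤ → Submodule k A
  [gradedA : GradedRing gr]
  d : A →ₗ[k] A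
  d_sq : ∀ a, d (d a) = 0
  d_mem : ∀ (i : ℤ), ∀ a ∈ gr i, d a ∈ gr (i + 1)
  leibniz : ∀ (i : ℤ), ∀ a ∈ gr i, ∀ b, d (a * b) = d a * b + (((-1 : ℤˣ) ^ i : ℤˣ) : ℤ) • (a * d b)

attribute [instance] DGA.ringA DGA.algA DGA.gradedA

namespace DGA

variable {k : Type} [CommRing k]

/-- A Maurer-Cartan element of a dg algebra: a degree `1` element `x` with `d x + x² = 0`. -/
def IsMC (A : DGA k) (x : A.A) : Prop := x ∈ A.gr 1 ∧ A.d x + x * x = 0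

/-- The set of Maurer-Cartan elements of `A`. -/
def MCEl (A : DGA k) : Type := {x : A.A // A.IsMC x}

/-- The gauge action of an invertible element `g` on `x`:  `g·x = g x g⁻¹ - (d g) g⁻¹`. -/
def GaugeAct (A : DGA k) (g : (A.A)ˣ) (x : A.A) : A.A :=
  (g : A.A) * x * ((g⁻¹ : (A.A)ˣ) : A.A) - A.d (g : A.A) * ((g⁻¹ : (A.A)ˣ) : A.A)

/-- Gauge equivalence of elements of a dg algebra: `y = g·x` for some invertible
degree-zero `g`. -/
def GaugeEquiv (A : DGA k) (x y : A.A) : Prop :=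
  ∃ g : (A.A)ˣ, (g : A.A) ∈ A.gr 0 ∧ y = A.GaugeAct g x

/-- The Maurer-Cartan moduli set: Maurer-Cartan elements modulo gauge equivalence. -/
def MCmod (A : DGA k) : Type := Quot (fun x y : A.MCEl => A.GaugeEquiv x.1 y.1)

/-- `a` is cohomologous to `1` in the twisted algebra `A^x` (with differential `d + [x,-]`);
here `a` has degree `0` so the twisted differential of the degree `-1` element `s`
is `d s + x s + s x`. -/
def CohomologousToOne (A : DGA k) (x a : A.A) : Prop :=
  ∃ s ∈ A.gr (-1 : ℤ), a - 1 = A.d s + (x * s + s * x)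

/-- Homotopy gauge equivalence of Maurer-Cartan elements: the one-sided twisted modules
`A^{[x]}` and `A^{[y]}` are homotopy equivalent as right dg `A`-modules, explicitly:
there are degree-zero `g`, `h` intertwining the twisted differentials whose composites
are cohomologous to `1` in `A^x`, resp. `A^y`. -/
def HomotopyGaugeEquiv (A : DGA k) (x y : A.A) : Prop :=
  ∃ g ∈ A.gr 0, ∃ h ∈ A.gr 0,
    A.d g + y * g - g * x = 0 ∧
    A.d h + x * h - h * y = 0 ∧
    A.CohomologousToOne x (h * g) ∧
    A.CohomologousToOne y (g * h)

/-- The Maurer-Cartan homotopy moduli set: MC elements modulo homotopy gauge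
equivalence. -/
def MChmod (A : DGA k) : Type := Quot (fun x y : A.MCEl => A.HomotopyGaugeEquiv x.1 y.1)

open scoped Classical in
/-- The parity (Koszul sign) operator of a graded algebra: `a ↦ Σᵢ (-1)ⁱ aᵢ`. -/
noncomputable def parity (A : DGA k) (a : A.A) : A.A :=
  (DirectSum.decompose A.gr a).sum (fun i x => (((-1 : ℤˣ) ^ i : ℤˣ) : ℤ) • (x : A.A))

end DGA

/-- A morphism of dg algebras: an algebra map preserving the grading and the differential. -/
structure DGAHom {k : Type} [CommRing k] (A B : DGA k) where
  toFun : A.A →ₐ[k] B.A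
  map_gr : ∀ (i : ℤ), ∀ a ∈ A.gr i, toFun a ∈ B.gr i
  map_d : ∀ a, toFun (A.d a) = B.d (toFun a)

namespace DGAHom
variable {k : Type} [CommRing k]

def comp {A B C : DGA k} (g : DGAHom B C) (f : DGAHom A B) : DGAHom A C where
  toFun := g.toFun.comp f.toFun
  map_gr := fun i a ha => g.map_gr i _ (f.map_gr i a ha)
  map_d := fun a => by simp [f.map_d, g.map_d]

def id' (A : DGA k) : DGAHom A A :=
  ⟨AlgHom.id k A.A, fun _ _ h => h, fun _ => rfl⟩

end DGAHom


open Filter Topology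

/-- Derivative of a curve in a topological vector space, within a set:
the limit of difference quotients. -/
def HasTVSDerivWithinAt {M : Type} [AddCommGroup M] [Module ℝ M] [TopologicalSpace M]
    (c : ℝ → M) (c' : M) (s : Set ℝ) (t : ℝ) : Prop :=
  Filter.Tendsto (fun u : ℝ => (u - t)⁻¹ • (c u - c t)) (nhdsWithin t (s \ {t})) (nhds c')

/-- A curve in a topological vector space is smooth on a set if it admits an infinite
tower of continuous derivatives on that set. -/
def TVSSmoothOn {M : Type} [AddCommGroup M] [Module ℝ M] [TopologicalSpace M]
    (c : ℝ → M) (s : Set ℝ) : Prop :=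
  ∃ D : ℕ → ℝ → M, D 0 = c ∧ (∀ n, ∀ t ∈ s, HasTVSDerivWithinAt (D n) (D (n + 1) t) s t) ∧
    ∀ n, ContinuousOn (D n) s

/-- Local m-convexity: `0` has a basis of convex balanced multiplicatively closed
neighbourhoods. Together with completeness and Hausdorffness this characterizes
Arens-Michael algebras. -/
def LocallyMConvex (A : Type) [Ring A] [Module ℝ A] [TopologicalSpace A] : Prop :=
  ∀ s ∈ nhds (0 : A), ∃ U ∈ nhds (0 : A),
    U ⊆ s ∧ Convex ℝ U ∧ Balanced ℝ U ∧ ∀ a ∈ U, ∀ b ∈ U, a * b ∈ U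

/-- Unfolding of a smooth homotopy `F : A → B ⊗ Ω[0,1]` between two maps of dg
Arens-Michael algebras, identifying `B ⊗ Ω[0,1]` with smooth `B`-valued forms
`F₀(a)(t) + F₁(a)(t) dt` on `[0,1]`:  `F` is `ℝ`-linear, unital, multiplicative
(with the Koszul sign rule on the `dt`-component), grading- and differential-
compatible, smooth in `t`, continuous in `a`, and restricts to `f₀`, `f₁` at the
endpoints. -/
def IsSmoothAlgHomotopy (A B : DGA ℝ) [TopologicalSpace A.A] [TopologicalSpace B.A] (f₀ f₁ : A.A → B.A)
    (F₀ F₁ : A.A → ℝ → B.A) : Prop :=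
  (∀ a b t, F₀ (a + b) t = F₀ a t + F₀ b t) ∧
  (∀ a b t, F₁ (a + b) t = F₁ a t + F₁ b t) ∧
  (∀ (c : ℝ) a t, F₀ (c • a) t = c • F₀ a t) ∧
  (∀ (c : ℝ) a t, F₁ (c • a) t = c • F₁ a t) ∧
  (∀ t, F₀ 1 t = 1) ∧ (∀ t, F₁ 1 t = 0) ∧
  (∀ a b t, F₀ (a * b) t = F₀ a t * F₀ b t) ∧
  (∀ (i : ℤ), ∀ a ∈ A.gr i, ∀ b t,
    F₁ (a * b) t = (((-1 : ℤˣ) ^ i : ℤˣ) : ℤ) • (F₀ a t * F₁ b t) + F₁ a t * F₀ b t) ∧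
  (∀ (i : ℤ), ∀ a ∈ A.gr i, ∀ t, F₀ a t ∈ B.gr i ∧ F₁ a t ∈ B.gr (i - 1)) ∧
  (∀ a t, F₀ (A.d a) t = B.d (F₀ a t)) ∧
  (∀ a, ∀ t ∈ Set.Icc (0 : ℝ) 1,
    HasTVSDerivWithinAt (F₀ a) (F₁ (A.d a) t + B.d (F₁ a t)) (Set.Icc (0 : ℝ) 1) t) ∧
  (∀ a, TVSSmoothOn (F₀ a) (Set.Icc (0 : ℝ) 1) ∧ TVSSmoothOn (F₁ a) (Set.Icc (0 : ℝ) 1)) ∧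
  (∀ t, Continuous (fun a => F₀ a t) ∧ Continuous fun a => F₁ a t) ∧
  (∀ a, F₀ a 0 = f₀ a ∧ F₀ a 1 = f₁ a)

/-- Two morphisms of dg Arens-Michael algebras are smoothly homotopic if there is a
smooth homotopy `A → B ⊗ Ω[0,1]` between them. -/
def SmoothlyHomotopicHoms (A B : DGA ℝ) [TopologicalSpace A.A] [TopologicalSpace B.A] (f₀ f₁ : DGAHom A B) : Prop :=
  ∃ F₀ F₁ : A.A → ℝ → B.A, IsSmoothAlgHomotopy A B f₀.toFun f₁.toFun F₀ F₁

/-- A smooth homotopy equivalence between two dg Arens-Michael algebras: continuous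
dg algebra maps `f : A → B` and `g : B → A` whose composites are smoothly homotopic
to the identities. -/
def SmoothHomotopyEquivalenceData (A B : DGA ℝ) [TopologicalSpace A.A] [TopologicalSpace B.A]
    (f : DGAHom A B) (g : DGAHom B A) : Prop :=
  Continuous f.toFun ∧ Continuous g.toFun ∧
    SmoothlyHomotopicHoms B B (f.comp g) (DGAHom.id' B) ∧
    SmoothlyHomotopicHoms A A (g.comp f) (DGAHom.id' A)

/-- Two dg Arens-Michael algebras are smoothly homotopy equivalent if there are continuous
dg algebra maps in both directions whose composites are smoothly homotopic to the
identities. -/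
def SmoothlyHomotopyEquivalent (A B : DGA ℝ) [TopologicalSpace A.A] [TopologicalSpace B.A] :
    Prop :=
  ∃ (f : DGAHom A B) (g : DGAHom B A), SmoothHomotopyEquivalenceData A B f g

section Helpers

open scoped ContDiff

theorem tvs_congr {M : Type} [AddCommGroup M] [Module ℝ M] [TopologicalSpace M]
    {c e : ℝ → M} {c' : M} {s : Set ℝ} {t : ℝ}
    (h : HasTVSDerivWithinAt c c' s t) (he : e =ᶠ[𝓝 t] c) : HasTVSDerivWithinAt e c' s t := by
  unfold HasTVSDerivWithinAt at *
  refine h.congr' ?_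
  have h1 : e t = c t := he.self_of_nhds
  filter_upwards [mem_nhdsWithin_of_mem_nhds he] with u hu
  have hu' : e u = c u := hu
  rw [h1, hu']

theorem tvs_add {M : Type} [AddCommGroup M] [Module ℝ M] [TopologicalSpace M] [ContinuousAdd M]
    {c e : ℝ → M} {c' e' : M} {s : Set ℝ} {t : ℝ}
    (hc : HasTVSDerivWithinAt c c' s t) (he : HasTVSDerivWithinAt e e' s t) :
    HasTVSDerivWithinAt (fun u => c u + e u) (c' + e') s t := by
  unfold HasTVSDerivWithinAt at *
  refine (hc.add he).congr ?_
  intro u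
  rw [← smul_add]
  congr 1
  exact (add_sub_add_comm _ _ _ _).symm

theorem tvs_const {M : Type} [AddCommGroup M] [Module ℝ M] [TopologicalSpace M]
    (m : M) (s : Set ℝ) (t : ℝ) : HasTVSDerivWithinAt (fun _ => m) 0 s t := by
  unfold HasTVSDerivWithinAt
  simpa using tendsto_const_nhds

theorem tvs_chain {M : Type} [AddCommGroup M] [Module ℝ M] [TopologicalSpace M]
    [ContinuousAdd M] [ContinuousSMul ℝ M]
    {c : ℝ → M} {c' : M} {s : Set ℝ} {t : ℝ} {φ θ : ℝ → ℝ} {φ' θ' : ℝ}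
    (hφ : HasDerivAt φ φ' t) (hθ : HasDerivAt θ θ' t) (hs : Set.MapsTo φ s s)
    (hc : HasTVSDerivWithinAt c c' s (φ t)) :
    HasTVSDerivWithinAt (fun u => θ u • c (φ u)) (θ' • c (φ t) + (θ t * φ') • c') s t := by
  classical
  unfold HasTVSDerivWithinAt at *
  set q : ℝ → M := fun v => if v = φ t then c' else (v - φ t)⁻¹ • (c v - c (φ t)) with hq
  have hqt : Tendsto q (𝓝[s] (φ t)) (𝓝 c') := by
    have hsub : s ⊆ (s \ {φ t}) ∪ {φ t} := by
      intro v hv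
      by_cases h : v = φ t
      · exact Or.inr h
      · exact Or.inl ⟨hv, h⟩
    refine Tendsto.mono_left ?_ (nhdsWithin_mono _ hsub)
    rw [nhdsWithin_union, tendsto_sup]
    constructor
    · refine hc.congr' ?_
      filter_upwards [self_mem_nhdsWithin] with v hv
      simp only [hq]
      rw [if_neg (show ¬ v = φ t from hv.2)]
    · rw [nhdsWithin_singleton, tendsto_pure_left]
      intro W hW
      simp only [hq, if_true]
      exact mem_of_mem_nhds hW
  have hφt : Tendsto φ (𝓝[s \ {t}] t) (𝓝[s] (φ t)) := by
    refine tendsto_nhdsWithin_iff.2 ⟨hφ.continuousAt.mono_left nhdsWithin_le_nhds, ?_⟩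
    filter_upwards [self_mem_nhdsWithin] with u hu
    exact hs hu.1
  have hle : 𝓝[s \ {t}] t ≤ 𝓝[≠] t := nhdsWithin_mono _ (fun u hu => hu.2)
  have s1 := (hasDerivAt_iff_tendsto_slope.1 hφ).mono_left hle
  have s2 := (hasDerivAt_iff_tendsto_slope.1 hθ).mono_left hle
  have hθt : Tendsto θ (𝓝[s \ {t}] t) (𝓝 (θ t)) :=
    hθ.continuousAt.mono_left nhdsWithin_le_nhds
  have key := (s2.smul (tendsto_const_nhds (x := c (φ t)))).add
    ((hθt.mul s1).smul (hqt.comp hφt))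
  refine key.congr ?_
  intro u
  have hqu : c (φ u) - c (φ t) = (φ u - φ t) • q (φ u) := by
    by_cases h : φ u = φ t
    · simp [h]
    · have : φ u - φ t ≠ 0 := sub_ne_zero.2 h
      simp only [hq, if_neg h]
      rw [smul_smul, mul_inv_cancel₀ this, one_smul]
  have e1 : θ u • c (φ u) - θ t • c (φ t)
      = (θ u - θ t) • c (φ t) + θ u • (c (φ u) - c (φ t)) := by
    rw [smul_sub, sub_smul]; abel
  rw [e1, hqu]
  simp only [slope_def_field, Function.comp, smul_add, smul_smul]
  congr 2 <;> ring

/-- Tower of derivatives of `θ • (D m ∘ φ)`. -/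
noncomputable def tower {M : Type} [AddCommGroup M] [Module ℝ M] (D : ℕ → ℝ → M) (φ : ℝ → ℝ) :
    ℕ → ℕ → (ℝ → ℝ) → ℝ → M
  | 0, m, θ => fun t => θ t • D m (φ t)
  | n + 1, m, θ => fun t => tower D φ n m (deriv θ) t
      + tower D φ n (m + 1) (fun u => θ u * deriv φ u) t

theorem contDiff_deriv_infty {f : ℝ → ℝ} (hf : ContDiff ℝ ∞ f) : ContDiff ℝ ∞ (deriv f) :=
  (contDiff_infty_iff_deriv.1 hf).2

theorem tvsSmooth_chain {M : Type} [AddCommGroup M] [Module ℝ M] [TopologicalSpace M]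
    [ContinuousAdd M] [ContinuousSMul ℝ M]
    {c : ℝ → M} {s : Set ℝ} {φ θ : ℝ → ℝ}
    (hφ : ContDiff ℝ ∞ φ) (hθ : ContDiff ℝ ∞ θ) (hs : Set.MapsTo φ s s)
    (hc : TVSSmoothOn c s) : TVSSmoothOn (fun u => θ u • c (φ u)) s := by
  obtain ⟨D, hD0, hD1, hD2⟩ := hc
  refine ⟨fun n => tower D φ n 0 θ, ?_, ?_, ?_⟩
  · simp [tower, hD0]
  · intro n t ht
    have : ∀ n m θ, ContDiff ℝ ∞ θ →
        HasTVSDerivWithinAt (tower D φ n m θ) (tower D φ (n + 1) m θ t) s t := by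
      intro n
      induction n with
      | zero =>
        intro m θ hθ
        exact tvs_chain ((hφ.differentiable (by simp)).differentiableAt.hasDerivAt)
          ((hθ.differentiable (by simp)).differentiableAt.hasDerivAt) hs (hD1 m _ (hs ht))
      | succ n ih =>
        intro m θ hθ
        exact tvs_add (ih m _ (contDiff_deriv_infty hθ))
          (ih (m + 1) _ (hθ.mul (contDiff_deriv_infty hφ)))
    exact this n 0 θ hθ
  · intro n
    have : ∀ n m θ, ContDiff ℝ ∞ θ → ContinuousOn (tower D φ n m θ) s := by
      intro n
      induction n with
      | zero =>
        intro m θ hθ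
        exact hθ.continuous.continuousOn.smul ((hD2 m).comp hφ.continuous.continuousOn hs)
      | succ n ih =>
        intro m θ hθ
        exact (ih m _ (contDiff_deriv_infty hθ)).add
          (ih (m + 1) _ (hθ.mul (contDiff_deriv_infty hφ)))
    exact this n 0 θ hθ

/-- Gluing two curves at `1/2`. -/
noncomputable def glue {M : Type} (c e : ℝ → M) : ℝ → M := fun t => if t ≤ 1 / 2 then c t else e t

theorem glue_left {M : Type} {c e : ℝ → M} (h : ∀ t ∈ Set.Ioo (1 / 3 : ℝ) (2 / 3), c t = e t)
    {t : ℝ} (ht : t < 2 / 3) : glue c e t = c t := by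
  unfold glue
  split_ifs with h1
  · rfl
  · exact (h t ⟨by linarith, ht⟩).symm

theorem glue_right {M : Type} {c e : ℝ → M} (h : ∀ t ∈ Set.Ioo (1 / 3 : ℝ) (2 / 3), c t = e t)
    {t : ℝ} (ht : 1 / 3 < t) : glue c e t = e t := by
  unfold glue
  split_ifs with h1
  · exact h t ⟨ht, by linarith⟩
  · rfl

theorem glue_left_ev {M : Type} {c e : ℝ → M}
    (h : ∀ t ∈ Set.Ioo (1 / 3 : ℝ) (2 / 3), c t = e t)
    {t : ℝ} (ht : t < 2 / 3) : glue c e =ᶠ[𝓝 t] c := by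
  filter_upwards [Iio_mem_nhds ht] with u hu
  exact glue_left h hu

theorem glue_right_ev {M : Type} {c e : ℝ → M}
    (h : ∀ t ∈ Set.Ioo (1 / 3 : ℝ) (2 / 3), c t = e t)
    {t : ℝ} (ht : 1 / 3 < t) : glue c e =ᶠ[𝓝 t] e := by
  filter_upwards [Ioi_mem_nhds ht] with u hu
  exact glue_right h hu

theorem lt_or_gt_third (t : ℝ) : t < 2 / 3 ∨ 1 / 3 < t := by
  by_cases h : t < 2 / 3
  · exact Or.inl h
  · right; linarith

theorem tvs_glue {M : Type} [AddCommGroup M] [Module ℝ M] [TopologicalSpace M]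
    {c e c' e' : ℝ → M} {s : Set ℝ} {t : ℝ}
    (h : ∀ t ∈ Set.Ioo (1 / 3 : ℝ) (2 / 3), c t = e t)
    (h' : ∀ t ∈ Set.Ioo (1 / 3 : ℝ) (2 / 3), c' t = e' t)
    (hc : HasTVSDerivWithinAt c (c' t) s t) (he : HasTVSDerivWithinAt e (e' t) s t) :
    HasTVSDerivWithinAt (glue c e) (glue c' e' t) s t := by
  rcases lt_or_gt_third t with ht | ht
  · rw [glue_left h' ht]
    exact tvs_congr hc (glue_left_ev h ht)
  · rw [glue_right h' ht]
    exact tvs_congr he (glue_right_ev h ht)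

theorem tvsSmooth_glue {M : Type} [AddCommGroup M] [Module ℝ M] [TopologicalSpace M] [T2Space M]
    {c e : ℝ → M}
    (h : ∀ t ∈ Set.Ioo (1 / 3 : ℝ) (2 / 3), c t = e t)
    (hc : TVSSmoothOn c (Set.Icc (0 : ℝ) 1)) (he : TVSSmoothOn e (Set.Icc (0 : ℝ) 1)) :
    TVSSmoothOn (glue c e) (Set.Icc (0 : ℝ) 1) := by
  obtain ⟨D, hD0, hD1, hD2⟩ := hc
  obtain ⟨E, hE0, hE1, hE2⟩ := he
  have agree : ∀ n, ∀ t ∈ Set.Ioo (1 / 3 : ℝ) (2 / 3), D n t = E n t := by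
    intro n
    induction n with
    | zero => rw [hD0, hE0]; exact h
    | succ n ih =>
      intro t ht
      have hI : Set.Icc (0 : ℝ) 1 ∈ 𝓝 t :=
        Icc_mem_nhds (by linarith [ht.1]) (by linarith [ht.2])
      have htI := mem_of_mem_nhds hI
      have h1 := hD1 n t htI
      have h2 : HasTVSDerivWithinAt (D n) (E (n + 1) t) (Set.Icc (0 : ℝ) 1) t := by
        refine tvs_congr (hE1 n t htI) ?_
        filter_upwards [Ioo_mem_nhds ht.1 ht.2] with u hu
        exact ih u hu
      have hne : (𝓝[Set.Icc (0 : ℝ) 1 \ {t}] t).NeBot := by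
        have : 𝓝[Set.Icc (0 : ℝ) 1 \ {t}] t = 𝓝[≠] t := by
          rw [Set.sdiff_eq]
          exact nhdsWithin_inter_of_mem (mem_nhdsWithin_of_mem_nhds hI)
        rw [this]
        infer_instance
      exact tendsto_nhds_unique h1 h2
  refine ⟨fun n => glue (D n) (E n), ?_, ?_, ?_⟩
  · simp only [hD0, hE0]
  · intro n t ht
    exact tvs_glue (agree n) (agree (n + 1)) (hD1 n t ht) (hE1 n t ht)
  · intro n t ht
    rcases lt_or_gt_third t with h1 | h1
    · exact (hD2 n t ht).congr_of_eventuallyEq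
        ((glue_left_ev (agree n) h1).filter_mono nhdsWithin_le_nhds) (glue_left (agree n) h1)
    · exact (hE2 n t ht).congr_of_eventuallyEq
        ((glue_right_ev (agree n) h1).filter_mono nhdsWithin_le_nhds) (glue_right (agree n) h1)

theorem homotopy_reparam {A B : DGA ℝ} [TopologicalSpace A.A] [TopologicalSpace B.A]
    [IsTopologicalRing B.A] [ContinuousSMul ℝ B.A]
    {f₀ f₁ : A.A → B.A} {F₀ F₁ : A.A → ℝ → B.A}
    (H : IsSmoothAlgHomotopy A B f₀ f₁ F₀ F₁) {φ : ℝ → ℝ} (hφ : ContDiff ℝ ∞ φ)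
    (hs : Set.MapsTo φ (Set.Icc (0 : ℝ) 1) (Set.Icc (0 : ℝ) 1)) :
    IsSmoothAlgHomotopy A B (fun a => F₀ a (φ 0)) (fun a => F₀ a (φ 1))
      (fun a t => F₀ a (φ t)) (fun a t => deriv φ t • F₁ a (φ t)) := by
  obtain ⟨a0, a1, s0, s1, o0, o1, m0, m1, g, d0, d1, sm, ct, -⟩ := H
  have one : ∀ c : ℝ → B.A, (fun u => (fun _ : ℝ => (1 : ℝ)) u • c (φ u)) = fun u => c (φ u) := by
    intro c; funext u; simp
  refine ⟨fun a b t => a0 a b _, fun a b t => ?_, fun c a t => s0 c a _, fun c a t => ?_,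
    fun t => o0 _, fun t => ?_, fun a b t => m0 a b _, fun i a ha b t => ?_,
    fun i a ha t => ⟨(g i a ha _).1, Submodule.smul_mem _ _ (g i a ha _).2⟩,
    fun a t => d0 a _, fun a t ht => ?_, fun a => ⟨?_, ?_⟩, fun t => ⟨(ct _).1, ?_⟩,
    fun a => ⟨rfl, rfl⟩⟩
  · simp only [a1, smul_add]
  · simp only [s1]; rw [smul_comm]
  · simp only [o1, smul_zero]
  · simp only [m1 i a ha, smul_add, mul_smul_comm, smul_mul_assoc]
    rw [smul_comm]
  · have := tvs_chain (hφ.differentiable (by simp)).differentiableAt.hasDerivAt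
      (hasDerivAt_const t (1 : ℝ)) hs (d1 a _ (hs ht))
    simpa [smul_add] using this
  · have := tvsSmooth_chain hφ (contDiff_const (c := (1 : ℝ))) hs (sm a).1
    simpa using this
  · exact tvsSmooth_chain hφ (contDiff_deriv_infty hφ) hs (sm a).2
  · exact (ct _).2.const_smul _

theorem homotopy_glue {A B : DGA ℝ} [TopologicalSpace A.A] [TopologicalSpace B.A] [T2Space B.A]
    {f₀ f₁ g₀ g₁ : A.A → B.A} {F₀ F₁ G₀ G₁ : A.A → ℝ → B.A}
    (H : IsSmoothAlgHomotopy A B f₀ f₁ F₀ F₁) (K : IsSmoothAlgHomotopy A B g₀ g₁ G₀ G₁)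
    (h0 : ∀ a, ∀ t ∈ Set.Ioo (1 / 3 : ℝ) (2 / 3), F₀ a t = G₀ a t)
    (h1 : ∀ a, ∀ t ∈ Set.Ioo (1 / 3 : ℝ) (2 / 3), F₁ a t = G₁ a t) :
    IsSmoothAlgHomotopy A B f₀ g₁ (fun a => glue (F₀ a) (G₀ a)) (fun a => glue (F₁ a) (G₁ a)) := by
  obtain ⟨a0, a1, s0, s1, o0, o1, m0, m1, g, d0, d1, sm, ct, ep⟩ := H
  obtain ⟨a0', a1', s0', s1', o0', o1', m0', m1', g', d0', d1', sm', ct', ep'⟩ := K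
  refine ⟨fun a b t => ?_, fun a b t => ?_, fun c a t => ?_, fun c a t => ?_,
    fun t => ?_, fun t => ?_, fun a b t => ?_, fun i a ha b t => ?_,
    fun i a ha t => ?_,
    fun a t => ?_, fun a t ht => ?_, fun a => ⟨?_, ?_⟩, fun t => ?_,
    fun a => ?_⟩
  · simp only [glue]; split_ifs <;> simp [a0, a0']
  · simp only [glue]; split_ifs <;> simp [a1, a1']
  · simp only [glue]; split_ifs <;> simp [s0, s0']
  · simp only [glue]; split_ifs <;> simp [s1, s1']
  · simp only [glue]; split_ifs <;> simp [o0, o0']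
  · simp only [glue]; split_ifs <;> simp [o1, o1']
  · simp only [glue]; split_ifs <;> simp [m0, m0']
  · simp only [glue]; split_ifs
    · exact m1 i a ha b t
    · exact m1' i a ha b t
  · simp only [glue]; split_ifs
    · exact g i a ha t
    · exact g' i a ha t
  · simp only [glue]; split_ifs <;> simp [d0, d0']
  · have := tvs_glue (c' := fun t => F₁ (A.d a) t + B.d (F₁ a t))
      (e' := fun t => G₁ (A.d a) t + B.d (G₁ a t)) (h0 a)
      (fun t ht => by simp only [h1 _ t ht]) (d1 a t ht) (d1' a t ht)
    convert this using 1
    simp only [glue]; split_ifs <;> rfl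
  · exact tvsSmooth_glue (h0 a) (sm a).1 (sm' a).1
  · exact tvsSmooth_glue (h1 a) (sm a).2 (sm' a).2
  · simp only [glue]; split_ifs
    · exact ct t
    · exact ct' t
  · refine ⟨?_, ?_⟩
    · exact (glue_left (h0 a) (by norm_num)).trans (ep a).1
    · exact (glue_right (h0 a) (by norm_num)).trans (ep' a).2

theorem homotopy_const {A B : DGA ℝ} [TopologicalSpace A.A] [TopologicalSpace B.A]
    (f : DGAHom A B) (hf : Continuous f.toFun) :
    IsSmoothAlgHomotopy A B f.toFun f.toFun (fun a _ => f.toFun a) (fun _ _ => 0) := by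
  have sm : ∀ b : B.A, TVSSmoothOn (fun _ : ℝ => b) (Set.Icc (0 : ℝ) 1) := by
    intro b
    refine ⟨fun n _ => if n = 0 then b else 0, by simp, fun n t _ => ?_,
      fun n => continuousOn_const⟩
    simpa using tvs_const _ _ t
  refine ⟨by simp, by simp, by simp, by simp, by simp, by simp, by simp, by simp,
    fun i a ha t => ⟨f.map_gr i a ha, Submodule.zero_mem _⟩, fun a t => f.map_d a,
    fun a t _ => ?_, fun a => ⟨sm _, sm _⟩, fun t => ⟨hf, continuous_const⟩, by simp⟩
  simpa using tvs_const (f.toFun a) _ t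

theorem stepL_deriv {t : ℝ} (ht : 1 / 3 < t) :
    deriv (fun t : ℝ => Real.smoothTransition (3 * t)) t = 0 := by
  have : (fun t : ℝ => Real.smoothTransition (3 * t)) =ᶠ[𝓝 t] fun _ => 1 := by
    filter_upwards [Ioi_mem_nhds ht] with u hu
    have hu' : 1 / 3 < u := hu
    exact Real.smoothTransition.one_of_one_le (by linarith)
  rw [this.deriv_eq]; simp

theorem stepR_deriv {t : ℝ} (ht : t < 2 / 3) :
    deriv (fun t : ℝ => Real.smoothTransition (3 * t - 2)) t = 0 := by
  have : (fun t : ℝ => Real.smoothTransition (3 * t - 2)) =ᶠ[𝓝 t] fun _ => 0 := by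
    filter_upwards [Iio_mem_nhds ht] with u hu
    have hu' : u < 2 / 3 := hu
    exact Real.smoothTransition.zero_of_nonpos (by linarith)
  rw [this.deriv_eq]; simp

theorem smoothlyHomotopic_of_eq {A B : DGA ℝ} [TopologicalSpace A.A] [TopologicalSpace B.A]
    {f g : DGAHom A B} {f₀ f₁ : A.A → B.A} {F₀ F₁ : A.A → ℝ → B.A}
    (H : IsSmoothAlgHomotopy A B f₀ f₁ F₀ F₁) (h0 : ∀ a, f₀ a = f.toFun a)
    (h1 : ∀ a, f₁ a = g.toFun a) : SmoothlyHomotopicHoms A B f g := by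
  obtain rfl : f₀ = f.toFun := funext h0
  obtain rfl : f₁ = g.toFun := funext h1
  exact ⟨_, _, H⟩

theorem smoothlyHomotopic_trans {A B : DGA ℝ} [TopologicalSpace A.A] [TopologicalSpace B.A]
    [T2Space B.A] [IsTopologicalRing B.A] [ContinuousSMul ℝ B.A] {f g h : DGAHom A B}
    (H : SmoothlyHomotopicHoms A B f g) (K : SmoothlyHomotopicHoms A B g h) :
    SmoothlyHomotopicHoms A B f h := by
  obtain ⟨F₀, F₁, H⟩ := H
  obtain ⟨G₀, G₁, K⟩ := K
  have epH : ∀ a, F₀ a 0 = f.toFun a ∧ F₀ a 1 = g.toFun a := H.2.2.2.2.2.2.2.2.2.2.2.2.2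
  have epK : ∀ a, G₀ a 0 = g.toFun a ∧ G₀ a 1 = h.toFun a := K.2.2.2.2.2.2.2.2.2.2.2.2.2
  have H' := homotopy_reparam H (φ := fun t => Real.smoothTransition (3 * t))
    (Real.smoothTransition.contDiff.comp (by fun_prop))
    (fun t _ => ⟨Real.smoothTransition.nonneg _, Real.smoothTransition.le_one _⟩)
  have K' := homotopy_reparam K (φ := fun t => Real.smoothTransition (3 * t - 2))
    (Real.smoothTransition.contDiff.comp (by fun_prop))
    (fun t _ => ⟨Real.smoothTransition.nonneg _, Real.smoothTransition.le_one _⟩)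
  have R := homotopy_glue H' K' ?_ ?_
  · refine smoothlyHomotopic_of_eq R ?_ ?_
    · intro a
      rw [Real.smoothTransition.zero_of_nonpos (by norm_num), (epH a).1]
    · intro a
      rw [Real.smoothTransition.one_of_one_le (by norm_num), (epK a).2]
  · intro a t ht
    rw [Real.smoothTransition.one_of_one_le (by linarith [ht.1]),
      Real.smoothTransition.zero_of_nonpos (by linarith [ht.2]), (epH a).2, (epK a).1]
  · intro a t ht
    rw [stepL_deriv ht.1, stepR_deriv ht.2, zero_smul, zero_smul]

theorem smoothlyHomotopic_symm {A B : DGA ℝ} [TopologicalSpace A.A] [TopologicalSpace B.A]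
    [IsTopologicalRing B.A] [ContinuousSMul ℝ B.A] {f g : DGAHom A B}
    (H : SmoothlyHomotopicHoms A B f g) : SmoothlyHomotopicHoms A B g f := by
  obtain ⟨F₀, F₁, H⟩ := H
  have epH : ∀ a, F₀ a 0 = f.toFun a ∧ F₀ a 1 = g.toFun a := H.2.2.2.2.2.2.2.2.2.2.2.2.2
  have H' := homotopy_reparam H (φ := fun t => 1 - t) (by fun_prop)
    (fun t ht => ⟨by linarith [ht.2], by linarith [ht.1]⟩)
  refine smoothlyHomotopic_of_eq H' ?_ ?_
  · intro a
    rw [sub_zero, (epH a).2]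
  · intro a
    rw [sub_self, (epH a).1]

end Helpers

/-- **Theorem.** The relation of smooth homotopy on continuous dg algebra morphisms
between dg Arens-Michael algebras is an equivalence relation (in particular, it is
transitive). -/
theorem smooth_homotopy_is_equivalence_relation
    (A B : DGA ℝ)
    [UniformSpace A.A] [CompleteSpace A.A] [T2Space A.A] [IsTopologicalRing A.A]
    [ContinuousSMul ℝ A.A]
    [UniformSpace B.A] [CompleteSpace B.A] [T2Space B.A] [IsTopologicalRing B.A]
    [ContinuousSMul ℝ B.A]
    (hA : LocallyMConvex A.A) (hB : LocallyMConvex B.A)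
    (hdA : Continuous A.d) (hdB : Continuous B.d) :
    Equivalence (fun f g : {h : DGAHom A B // Continuous h.toFun} =>
      SmoothlyHomotopicHoms A B f.1 g.1) := by
  exact ⟨fun f => ⟨_, _, homotopy_const f.1 f.2⟩, fun H => smoothlyHomotopic_symm H,
    fun H K => smoothlyHomotopic_trans H K⟩
end

section
/- Any dg algebra A over a commutative ring k is strongly homotopy equivalent to A ⊗ I*, where I* is the normalized cochain dg algebra of the singular simplicial set of [0,1]; in particular I* is strongly homotopy equivalent to k. -/
open DirectSum

/-! ## Topological simplices and singular simplices -/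

/-- The standard topological `n`-simplex. -/
def TopSimplex (n : ℕ) : Type :=
  {f : Fin (n + 1) → ℝ // (∀ i, 0 ≤ f i) ∧ ∑ i, f i = 1}

instance (n : ℕ) : TopologicalSpace (TopSimplex n) :=
  inferInstanceAs (TopologicalSpace {f : Fin (n + 1) → ℝ // (∀ i, 0 ≤ f i) ∧ ∑ i, f i = 1})

/-- The affine map of topological simplices induced by a map of vertices. -/
def vertAffine {m n : ℕ} (v : Fin (m + 1) → Fin (n + 1)) :
    C(TopSimplex m, TopSimplex n) where
  toFun f := ⟨fun j => ∑ i ∈ Finset.univ.filter (fun i => v i = j), f.1 i,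
    ⟨fun j => Finset.sum_nonneg fun i _ => f.2.1 i, by
      rw [Finset.sum_fiberwise_of_maps_to (fun i _ => Finset.mem_univ (v i)) f.1]
      exact f.2.2⟩⟩
  continuous_toFun := by
    apply Continuous.subtype_mk
    exact continuous_pi fun j => continuous_finset_sum _ fun i _ =>
      (continuous_apply i).comp continuous_subtype_val

/-- The `i`-th face inclusion of topological simplices. -/
def faceMap {n : ℕ} (i : Fin (n + 2)) : C(TopSimplex n, TopSimplex (n + 1)) :=
  vertAffine fun j => i.succAbove j

/-- The `i`-th degeneracy (collapse) map of topological simplices. -/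
def degenMap {n : ℕ} (i : Fin (n + 1)) : C(TopSimplex (n + 1), TopSimplex n) :=
  vertAffine fun j => i.predAbove j

/-- The inclusion of the front `p`-face of the `n`-simplex. -/
def frontMap (p n : ℕ) (h : p ≤ n) : C(TopSimplex p, TopSimplex n) :=
  vertAffine fun j => Fin.castLE (by omega) j

/-- The inclusion of the back `q`-face of the `n`-simplex. -/
def backMap (q n : ℕ) (h : q ≤ n) : C(TopSimplex q, TopSimplex n) :=
  vertAffine fun j : Fin (q + 1) => (⟨n - q + (j : ℕ), by have := j.isLt; omega⟩ : Fin (n + 1))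

/-- The `j`-th vertex of the topological `n`-simplex. -/
def vertexPt (n : ℕ) (j : Fin (n + 1)) : TopSimplex n :=
  ⟨fun i => if i = j then 1 else 0,
    ⟨fun i => by dsimp only; split <;> norm_num, by simp⟩⟩

/-- The set of singular `n`-simplices of a topological space. -/
def SingN (X : Type) [TopologicalSpace X] (n : ℕ) : Type := C(TopSimplex n, X)

/-- A singular `(n+1)`-simplex is degenerate if it factors through a degeneracy map. -/
def IsDegenSimplex {X : Type} [TopologicalSpace X] {n : ℕ} (σ : SingN X (n + 1)) : Prop :=
  ∃ (i : Fin (n + 1)) (τ : SingN X n), σ = (τ : C(TopSimplex n, X)).comp (degenMap i)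

/-- The constant singular `0`-simplex of `[0,1]` at `0`. -/
def const0 : SingN unitInterval 0 := ContinuousMap.const _ 0

/-- The constant singular `0`-simplex of `[0,1]` at `1`. -/
def const1 : SingN unitInterval 0 := ContinuousMap.const _ 1

/-! ## Strong homotopy of dg algebra morphisms -/

/-- An elementary strong homotopy between two dg algebra maps `f, g : A → B`: a dg
algebra map `H : A → B ⊗ I*` (where `I*` is the normalized singular cochain algebra of
`[0,1]`, the tensor product being completed) restricting to `f` and `g` at the two
endpoints.  `B ⊗ I*` is identified with normalized `B`-valued singular cochains on
`[0,1]`, so `H` is given by its components `H a n σ ∈ B^{i-n}` for `a ∈ A^i` and `σ` a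
singular `n`-simplex; multiplicativity is the Alexander-Whitney convolution formula
with Koszul signs, and compatibility with differentials uses the singular coboundary. -/
def IsElemStrongHomotopy {k : Type} [CommRing k] (A B : DGA k) (f g : A.A → B.A)
    (H : A.A → ∀ n, SingN unitInterval n → B.A) : Prop :=
  (∀ a b n σ, H (a + b) n σ = H a n σ + H b n σ) ∧
  (∀ (c : k) a n σ, H (c • a) n σ = c • H a n σ) ∧
  (∀ a (n : ℕ) (i : Fin (n + 1)) (τ : SingN unitInterval n),
    H a (n + 1) (ContinuousMap.comp τ (degenMap i)) = 0) ∧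
  (∀ (i : ℤ), ∀ a ∈ A.gr i, ∀ (n : ℕ) σ, H a n σ ∈ B.gr (i - (n : ℤ))) ∧
  (∀ σ, H 1 0 σ = 1) ∧ (∀ (n : ℕ) σ, H 1 (n + 1) σ = 0) ∧
  (∀ (i j : ℤ), ∀ a ∈ A.gr i, ∀ b ∈ A.gr j, ∀ (n : ℕ) (σ : SingN unitInterval n),
    H (a * b) n σ =
      ∑ p : Fin (n + 1),
        (((-1 : ℤˣ) ^ (((p : ℕ) : ℤ) * (j - ((n : ℤ) - ((p : ℕ) : ℤ)))) : ℤˣ) : ℤ) •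
          (H a (p : ℕ) (ContinuousMap.comp σ (frontMap (p : ℕ) n (Nat.le_of_lt_succ p.isLt))) *
            H b (n - (p : ℕ)) (ContinuousMap.comp σ (backMap (n - (p : ℕ)) n (by omega))))) ∧
  (∀ (i : ℤ), ∀ a ∈ A.gr i,
    (∀ σ : SingN unitInterval 0, H (A.d a) 0 σ = B.d (H a 0 σ)) ∧
    (∀ (n : ℕ) (σ : SingN unitInterval (n + 1)),
      H (A.d a) (n + 1) σ =
        B.d (H a (n + 1) σ) +
          (((-1 : ℤˣ) ^ (i - (n : ℤ)) : ℤˣ) : ℤ) •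
            ∑ i' : Fin (n + 2), (((-1 : ℤˣ) ^ (i' : ℕ) : ℤˣ) : ℤ) •
              H a n (ContinuousMap.comp σ (faceMap i')))) ∧
  (∀ a, H a 0 const0 = f a ∧ H a 0 const1 = g a)

/-- Two dg algebra morphisms are strongly homotopic if they are related by the
equivalence relation generated by elementary strong homotopies. -/
def StronglyHomotopicHoms {k : Type} [CommRing k] (A B : DGA k) :
    DGAHom A B → DGAHom A B → Prop :=
  Relation.EqvGen (fun f g => ∃ H, IsElemStrongHomotopy A B f.toFun g.toFun H)

/-- Two dg algebras are strongly homotopy equivalent if there are dg algebra maps in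
both directions whose composites are strongly homotopic to the identities. -/
def StronglyHomotopyEquivalent {k : Type} [CommRing k] (A B : DGA k) : Prop :=
  ∃ (f : DGAHom A B) (g : DGAHom B A),
    StronglyHomotopicHoms B B (f.comp g) (DGAHom.id' B) ∧
    StronglyHomotopicHoms A A (g.comp f) (DGAHom.id' A)

/-! ## The trivial dg algebra `k` -/

/-- The trivial grading of `k`, concentrated in degree `0`. -/
def trivGrading (k : Type) [CommRing k] : ℤ → Submodule k k :=
  fun i => if i = 0 then ⊤ else ⊥

instance trivGradedRing (k : Type) [CommRing k] : GradedRing (trivGrading k) where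
  one_mem := by simp [trivGrading]
  mul_mem := by
    intro i j a b ha hb
    by_cases hi : i = 0
    · by_cases hj : j = 0
      · subst hi; subst hj; simp [trivGrading]
      · have hb0 : b = 0 := by simpa [trivGrading, hj] using hb
        simp [hb0]
    · have ha0 : a = 0 := by simpa [trivGrading, hi] using ha
      simp [ha0]
  decompose' := fun x => DirectSum.of (fun i => trivGrading k i) 0 ⟨x, by simp [trivGrading]⟩
  left_inv := fun x => by simp
  right_inv := fun x => by
    induction x using DirectSum.induction_on with
    | zero =>
        simp only [map_zero]
        exact map_zero _
    | of j y =>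
        by_cases hj : j = 0
        · subst hj
          simp only [DirectSum.coeAddMonoidHom_of]
        · have hy : (y : k) = 0 := by simpa [trivGrading, hj] using y.2
          have hy0 : y = 0 := Subtype.ext hy
          subst hy0
          simp only [map_zero]
          exact map_zero _
    | add a b ha hb =>
        have key : (⟨(DirectSum.coeAddMonoidHom (trivGrading k)) (a + b),
            by simp [trivGrading]⟩ : trivGrading k 0) =
            ⟨(DirectSum.coeAddMonoidHom (trivGrading k)) a, by simp [trivGrading]⟩ +
            ⟨(DirectSum.coeAddMonoidHom (trivGrading k)) b, by simp [trivGrading]⟩ :=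
          Subtype.ext (map_add _ _ _)
        exact (congrArg (DirectSum.of (fun i => (trivGrading k i : Submodule k k)) 0) key).trans
          ((map_add _ _ _).trans (congrArg₂ (· + ·) ha hb))

/-- The commutative ring `k` viewed as a dg algebra concentrated in degree `0` with zero
differential. -/
def DGA.triv (k : Type) [CommRing k] : DGA k where
  A := k
  gr := trivGrading k
  d := 0
  d_sq := fun _ => rfl
  d_mem := fun _ _ _ => by simp [trivGrading]
  leibniz := fun i a _ b => by simp

/-! ## Characterization of the completed tensor product `A ⊗ I*` -/

/-- `T` is a realization of `A ⊗ I*`, the (completed) tensor product of a dg algebra `A`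
with the normalized singular cochain algebra `I*` of `[0,1]`:  via component maps `E`,
homogeneous degree-`m` elements of `T` correspond exactly to normalized `A`-valued
singular cochains on `[0,1]` of total degree `m`, compatibly with units, products
(Alexander-Whitney convolution with Koszul signs) and differentials. -/
def IsCochainTensorI {k : Type} [CommRing k] (A T : DGA k) : Prop :=
  ∃ E : T.A → ∀ n : ℕ, SingN unitInterval n → A.A,
    (∀ p q (n : ℕ) σ, E (p + q) n σ = E p n σ + E q n σ) ∧
    (∀ (c : k) p (n : ℕ) σ, E (c • p) n σ = c • E p n σ) ∧
    (∀ p (n : ℕ) (i : Fin (n + 1)) (τ : SingN unitInterval n),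
      E p (n + 1) (ContinuousMap.comp τ (degenMap i)) = 0) ∧
    (∀ (m : ℤ), ∀ p ∈ T.gr m, ∀ (n : ℕ) σ, E p n σ ∈ A.gr (m - (n : ℤ))) ∧
    (∀ (m : ℤ), ∀ p ∈ T.gr m, (∀ (n : ℕ) σ, E p n σ = 0) → p = 0) ∧
    (∀ (m : ℤ) (Y : ∀ n : ℕ, SingN unitInterval n → A.A),
      (∀ (n : ℕ) σ, Y n σ ∈ A.gr (m - (n : ℤ))) →
      (∀ (n : ℕ) (i : Fin (n + 1)) (τ : SingN unitInterval n),
        Y (n + 1) (ContinuousMap.comp τ (degenMap i)) = 0) →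
      ∃ p ∈ T.gr m, ∀ (n : ℕ) σ, E p n σ = Y n σ) ∧
    (∀ σ, E 1 0 σ = 1) ∧ (∀ (n : ℕ) σ, E 1 (n + 1) σ = 0) ∧
    (∀ (i j : ℤ), ∀ p ∈ T.gr i, ∀ q ∈ T.gr j, ∀ (n : ℕ) (σ : SingN unitInterval n),
      E (p * q) n σ =
        ∑ r : Fin (n + 1),
          (((-1 : ℤˣ) ^ (((r : ℕ) : ℤ) * (j - ((n : ℤ) - ((r : ℕ) : ℤ)))) : ℤˣ) : ℤ) •
            (E p (r : ℕ)
                (ContinuousMap.comp σ (frontMap (r : ℕ) n (Nat.le_of_lt_succ r.isLt))) *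
              E q (n - (r : ℕ))
                (ContinuousMap.comp σ (backMap (n - (r : ℕ)) n (by omega))))) ∧
    (∀ (i : ℤ), ∀ p ∈ T.gr i,
      (∀ σ : SingN unitInterval 0, E (T.d p) 0 σ = A.d (E p 0 σ)) ∧
      (∀ (n : ℕ) (σ : SingN unitInterval (n + 1)),
        E (T.d p) (n + 1) σ =
          A.d (E p (n + 1) σ) +
            (((-1 : ℤˣ) ^ (i - (n : ℤ)) : ℤˣ) : ℤ) •
              ∑ i' : Fin (n + 2), (((-1 : ℤˣ) ^ (i' : ℕ) : ℤˣ) : ℤ) •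
                E p n (ContinuousMap.comp σ (faceMap i'))))

/-- The sign `(-1)^i` as an integer. -/
def sg (i : ℤ) : ℤ := (((-1 : ℤˣ) ^ i : ℤˣ) : ℤ)

lemma sg_zero : sg 0 = 1 := by simp [sg]

lemma sg_add (i j : ℤ) : sg (i + j) = sg i * sg j := by simp [sg, zpow_add]

lemma sg_cases (i : ℤ) : sg i = 1 ∨ sg i = -1 := by
  rcases Int.units_eq_one_or ((-1 : ℤˣ) ^ i) with h | h <;> simp [sg, h]

lemma sg_one : sg 1 = -1 := by simp [sg]

lemma sg_even (i : ℤ) : sg (2 * i) = 1 := by simp [sg, zpow_mul]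

lemma sg_congr {i j : ℤ} (c : ℤ) (h : i = j + 2 * c) : sg i = sg j := by
  rw [h, sg_add, sg_even, mul_one]

lemma sg_succ (i : ℤ) : sg (i + 1) = - sg i := by rw [sg_add, sg_one]; ring

namespace EZ

variable {α β γ δ M N : Type*} [AddCommGroup M] [AddCommGroup N]

/-- Corner term: `x` if both lists are empty. -/
def corner : List α → List β → M → M
  | [], [], x => x
  | _, _, _ => 0

/-- Signed sum over lattice paths (shuffles). -/
def S : List α → List β → (List (α × β) → M) → M
  | [], _, _ => 0
  | _ :: _, [], _ => 0
  | b :: w, a :: l, φ => corner w l (φ [(b, a)]) +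
      sg l.length • S w (a :: l) (fun L => φ ((b, a) :: L)) +
      S (b :: w) l (fun L => φ ((b, a) :: L))
termination_by w l => w.length + l.length

/-- Alternating sum over erasures. -/
def D : (List α → M) → List α → M
  | _, [] => 0
  | F, b :: w => F w - D (fun v => F (b :: v)) w

/-- Sum over cuts. -/
def K : (List α → List α → M) → List α → M
  | _, [] => 0
  | Φ, a :: L => Φ [a] (a :: L) + K (fun x y => Φ (a :: x) y) L

@[simp] lemma S_nil (l : List β) (φ : List (α × β) → M) : S [] l φ = 0 := by simp [S]
@[simp] lemma S_nil' (w : List α) (φ : List (α × β) → M) : S w [] φ = 0 := by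
  cases w <;> simp [S]
lemma S_cons (b : α) (w : List α) (a : β) (l : List β) (φ : List (α × β) → M) :
    S (b :: w) (a :: l) φ = corner w l (φ [(b, a)]) +
      sg l.length • S w (a :: l) (fun L => φ ((b, a) :: L)) +
      S (b :: w) l (fun L => φ ((b, a) :: L)) := by rw [S]

lemma corner_map (g : M →+ N) (w : List α) (l : List β) (x : M) :
    corner w l (g x) = g (corner w l x) := by
  cases w <;> cases l <;> simp [corner]

lemma corner_add (w : List α) (l : List β) (x y : M) :
    corner w l (x + y) = corner w l x + corner w l y := by
  cases w <;> cases l <;> simp [corner]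

lemma S_map_hom (g : M →+ N) (w : List α) (l : List β) (φ : List (α × β) → M) :
    S w l (fun L => g (φ L)) = g (S w l φ) := by
  induction w generalizing l φ with
  | nil => simp
  | cons b w ihw =>
    induction l generalizing φ with
    | nil => simp
    | cons a l ihl =>
      rw [S_cons, S_cons, ihw (a :: l) (fun L => φ ((b, a) :: L)),
        ihl (fun L => φ ((b, a) :: L)), corner_map]
      simp

lemma S_add (w : List α) (l : List β) (φ ψ : List (α × β) → M) :
    S w l (fun L => φ L + ψ L) = S w l φ + S w l ψ := by
  induction w generalizing l φ ψ with
  | nil => simp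
  | cons b w ihw =>
    induction l generalizing φ ψ with
    | nil => simp
    | cons a l ihl =>
      rw [S_cons, S_cons, S_cons, corner_add, ihw (a :: l) (fun L => φ ((b, a) :: L)),
        ihl (fun L => φ ((b, a) :: L)), smul_add]
      abel

lemma S_zsmul (c : ℤ) (w : List α) (l : List β) (φ : List (α × β) → M) :
    S w l (fun L => c • φ L) = c • S w l φ :=
  S_map_hom (DistribSMul.toAddMonoidHom M c) w l φ

lemma S_sub (w : List α) (l : List β) (φ ψ : List (α × β) → M) :
    S w l (fun L => φ L - ψ L) = S w l φ - S w l ψ := by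
  have h1 := S_zsmul (-1) w l ψ
  have := S_add w l φ (fun L => (-1 : ℤ) • ψ L)
  rw [h1] at this
  simpa [sub_eq_add_neg] using this

/-- The value depends only on lists of the right length. -/
lemma S_congr (w : List α) (l : List β) (φ ψ : List (α × β) → M)
    (h : ∀ L : List (α × β), L.length + 1 = w.length + l.length → L ≠ [] → φ L = ψ L) :
    S w l φ = S w l ψ := by
  induction w generalizing l φ ψ with
  | nil => simp
  | cons b w ihw =>
    induction l generalizing φ ψ with
    | nil => simp
    | cons a l ihl =>
      rw [S_cons, S_cons, ihw (a :: l) (fun L => φ ((b, a) :: L)) (fun L => ψ ((b, a) :: L)),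
        ihl (fun L => φ ((b, a) :: L)) (fun L => ψ ((b, a) :: L))]
      · congr 2
        cases w <;> cases l <;> simp [corner]
        exact h _ (by simp) (by simp)
      · intro L hL _
        exact h _ (by simp at hL ⊢; omega) (by simp)
      · intro L hL _
        exact h _ (by simp at hL ⊢; omega) (by simp)

lemma S_zero (w : List α) (l : List β) : S w l (fun _ => (0 : M)) = 0 := by
  have := S_zsmul 0 w l (fun _ : List (α × β) => (0 : M))
  simpa using this

lemma S_eq_zero (w : List α) (l : List β) (φ : List (α × β) → M)
    (h : ∀ L : List (α × β), L.length + 1 = w.length + l.length → L ≠ [] → φ L = 0) :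
    S w l φ = 0 := by
  rw [S_congr w l φ (fun _ => 0) h, S_zero]

/-- membership in an additive subgroup -/
lemma S_mem (P : AddSubgroup M) (w : List α) (l : List β) (φ : List (α × β) → M)
    (h : ∀ L : List (α × β), L.length + 1 = w.length + l.length → L ≠ [] → φ L ∈ P) :
    S w l φ ∈ P := by
  have : S w l (fun L => QuotientAddGroup.mk' P (φ L)) = 0 :=
    S_eq_zero _ _ _ fun L hL hn => (QuotientAddGroup.eq_zero_iff _).2 (h L hL hn)
  rw [S_map_hom] at this
  exact (QuotientAddGroup.eq_zero_iff _).1 this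

lemma S_map (f : γ → α) (g : δ → β) (w : List γ) (l : List δ) (φ : List (α × β) → M) :
    S (w.map f) (l.map g) φ = S w l (fun L => φ (L.map (Prod.map f g))) := by
  induction w generalizing l φ with
  | nil => simp
  | cons b w ihw =>
    induction l generalizing φ with
    | nil => simp
    | cons a l ihl =>
      have h1 := ihw (a :: l) (fun L => φ ((f b, g a) :: L))
      have h2 := ihl (fun L => φ ((f b, g a) :: L))
      simp only [List.map_cons] at h1 h2 ⊢
      rw [S_cons, S_cons, h1, h2]
      have : corner (w.map f) (l.map g) (φ [(f b, g a)]) = corner w l (φ [(f b, g a)]) := by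
        cases w <;> cases l <;> simp [corner]
      rw [this]
      simp

/-! ### degenerate lists -/

/-- has an adjacent repeat -/
def Dup (L : List α) : Prop := ∃ x a y, L = x ++ a :: a :: y

lemma Dup.cons {L : List α} (e : α) (h : Dup L) : Dup (e :: L) := by
  obtain ⟨x, a, y, rfl⟩ := h
  exact ⟨e :: x, a, y, rfl⟩

lemma S_head (b : α) (w : List α) (a : β) (l : List β) (φ : List (α × β) → M)
    (h : ∀ L, φ ((b, a) :: L) = 0) : S (b :: w) (a :: l) φ = 0 := by
  rw [S_cons]
  simp only [h, S_zero]
  cases w <;> cases l <;> simp [corner]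

lemma S_dup_right (w : List α) (l : List β) (hl : Dup l) (φ : List (α × β) → M)
    (h : ∀ L, Dup L → φ L = 0) : S w l φ = 0 := by
  induction w generalizing l φ with
  | nil => simp
  | cons b w ihw =>
    induction l generalizing φ with
    | nil => simp
    | cons a l ihl =>
      rw [S_cons, ihw (a :: l) hl _ (fun L hL => h _ (hL.cons _))]
      obtain ⟨x, c, y, hx⟩ := hl
      have hc : corner w l (φ [(b, a)]) = 0 := by
        cases l
        · rcases x with _ | ⟨_, _⟩ <;> simp at hx
        · cases w <;> simp [corner]
      rw [hc]
      rcases x with _ | ⟨z, x⟩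
      · simp at hx
        obtain ⟨rfl, rfl⟩ := hx
        rw [S_head _ _ _ _ (fun L => φ ((b, a) :: L)) (fun L => h _ ⟨[], (b, a), L, rfl⟩)]
        simp
      · simp at hx
        rw [ihl ⟨x, c, y, hx.2⟩ _ (fun L hL => h _ (hL.cons _))]
        simp

lemma S_dup_left (w : List α) (l : List β) (hw : Dup w) (φ : List (α × β) → M)
    (h : ∀ L, Dup L → φ L = 0) : S w l φ = 0 := by
  induction w generalizing l φ with
  | nil => simp
  | cons b w ihw =>
    induction l generalizing φ with
    | nil => simp
    | cons a l ihl =>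
      rw [S_cons, ihl _ (fun L hL => h _ (hL.cons _))]
      obtain ⟨x, c, y, hx⟩ := hw
      have hc : corner w l (φ [(b, a)]) = 0 := by
        cases w
        · rcases x with _ | ⟨_, _⟩ <;> simp at hx
        · cases l <;> simp [corner]
      rw [hc]
      rcases x with _ | ⟨z, x⟩
      · simp at hx
        obtain ⟨rfl, rfl⟩ := hx
        rw [S_head _ _ _ _ (fun L => φ ((b, a) :: L)) (fun L => h _ ⟨[], (b, a), L, rfl⟩)]
        simp
      · simp at hx
        rw [ihw (a :: l) ⟨x, c, y, hx.2⟩ _ (fun L hL => h _ (hL.cons _))]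
        simp

/-! ### boundary -/

lemma D_congr (F G : List α → M) (w : List α)
    (h : ∀ v : List α, v.length + 1 = w.length → F v = G v) : D F w = D G w := by
  induction w generalizing F G with
  | nil => simp [D]
  | cons b w ih =>
    rw [D, D, h w (by simp), ih _ (fun v => G (b :: v))]
    intro v hv
    exact h _ (by simp [hv])

lemma D_add (F G : List α → M) (w : List α) :
    D (fun v => F v + G v) w = D F w + D G w := by
  induction w generalizing F G with
  | nil => simp [D]
  | cons b w ih => rw [D, D, D, ih]; abel

lemma D_zsmul (c : ℤ) (F : List α → M) (w : List α) :
    D (fun v => c • F v) w = c • D F w := by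
  induction w generalizing F with
  | nil => simp [D]
  | cons b w ih => rw [D, D, ih, smul_sub]

lemma D_zero (w : List α) : D (fun _ => (0 : M)) w = 0 := by
  have := D_zsmul 0 (fun _ : List α => (0 : M)) w
  simpa using this

/-- Corner term: `x` if both lists are singletons. -/
def corner1 : List α → List β → M → M
  | _ :: w, _ :: l, x => corner w l x
  | _, _, _ => 0

lemma D_corner (w : List α) (a : β) (l : List β) (x : M) :
    D (fun v => corner v l x) w = corner1 w (a :: l) x := by
  rcases w with _ | ⟨b, _ | ⟨c, w⟩⟩
  · simp [D, corner1]
  · simp [D, corner1]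
  · rw [D_congr _ (fun _ => 0), D_zero]
    · cases l <;> simp [corner1, corner]
    · intro v hv
      rcases v with _ | ⟨d, v⟩
      · simp at hv
      · cases l <;> simp [corner]

lemma D_corner' (b : α) (w : List α) (l : List β) (x : M) :
    D (fun v => corner w v x) l = corner1 (b :: w) l x := by
  rcases l with _ | ⟨a, _ | ⟨c, l⟩⟩
  · simp [D, corner1]
  · simp [D, corner1]
  · rw [D_congr _ (fun _ => 0), D_zero]
    · cases w <;> simp [corner1, corner]
    · intro v hv
      rcases v with _ | ⟨d, v⟩
      · simp at hv
      · cases w <;> simp [corner]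

lemma S_D (w : List α) (l : List β) (φ : List (α × β) → M) :
    S w l (D φ) = D (fun u => S w u φ) l + sg (l.length + 1) • D (fun v => S v l φ) w
      + corner1 w l (φ []) := by
  induction w generalizing l φ with
  | nil => simp [D, corner1, D_zero]
  | cons b w ihw =>
    induction l generalizing φ with
    | nil => simp [D, corner1, D_zero]
    | cons a l ihl =>
      set φe : List (α × β) → M := fun L => φ ((b, a) :: L) with hφe
      have e1 : S (b :: w) (a :: l) (D φ) = corner w l (φ []) +
          sg l.length • (S w (a :: l) φ - S w (a :: l) (D φe)) +
          (S (b :: w) l φ - S (b :: w) l (D φe)) := by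
        rw [S_cons, ← S_sub, ← S_sub]
        simp [D, hφe]
      have e2 : D (fun v => S v (a :: l) φ) (b :: w) = S w (a :: l) φ -
          (corner1 w (a :: l) (φe []) + sg l.length • D (fun v => S v (a :: l) φe) w +
            D (fun v => S (b :: v) l φe) w) := by
        rw [D, ← D_corner, ← D_zsmul, ← D_add, ← D_add]
        congr 2
        funext v
        rw [S_cons]
      have e3 : D (fun u => S (b :: w) u φ) (a :: l) = S (b :: w) l φ -
          (corner1 (b :: w) l (φe []) + (- sg l.length) • D (fun u => S w (a :: u) φe) l +
            D (fun u => S (b :: w) u φe) l) := by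
        rw [D, ← D_corner', ← D_zsmul, ← D_add, ← D_add]
        congr 1
        apply D_congr
        intro u hu
        rw [S_cons, ← hu]
        push_cast
        rw [sg_succ, neg_neg]
      have e4 : D (fun v => S v l φe) (b :: w) = S w l φe - D (fun v => S (b :: v) l φe) w := by
        rw [D]
      have e5 : D (fun u => S w u φe) (a :: l) = S w l φe - D (fun u => S w (a :: u) φe) l := by
        rw [D]
      rw [e1, e2, e3, ihw, ihl, e4, e5]
      simp only [List.length_cons]
      push_cast
      have hc : corner1 (b :: w) (a :: l) (φ []) = corner w l (φ []) := by simp [corner1]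
      rw [hc, sg_succ, sg_succ, neg_neg]
      rcases sg_cases (l.length : ℤ) with h | h <;> rw [h] <;> simp <;> abel

/-! ### coproduct -/

lemma K_congr (Φ Ψ : List α → List α → M) (L : List α)
    (h : ∀ x y, x ≠ [] → y ≠ [] → x.length + y.length = L.length + 1 → Φ x y = Ψ x y) :
    K Φ L = K Ψ L := by
  induction L generalizing Φ Ψ with
  | nil => simp [K]
  | cons a L ih =>
    rw [K, K, h [a] (a :: L) (by simp) (by simp) (by simp; omega),
      ih _ (fun x y => Ψ (a :: x) y)]
    intro x y hx hy hl
    exact h _ _ (by simp) hy (by simp; omega)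

lemma K_add (Φ Ψ : List α → List α → M) (L : List α) :
    K (fun x y => Φ x y + Ψ x y) L = K Φ L + K Ψ L := by
  induction L generalizing Φ Ψ with
  | nil => simp [K]
  | cons a L ih => rw [K, K, K, ih]; abel

lemma K_zsmul (c : ℤ) (Φ : List α → List α → M) (L : List α) :
    K (fun x y => c • Φ x y) L = c • K Φ L := by
  induction L generalizing Φ with
  | nil => simp [K]
  | cons a L ih => rw [K, K, ih, smul_add]

/-- The right hand side of the coproduct formula. -/
def R (w : List α) (l : List β) (Φ : List (α × β) → List (α × β) → M) : M :=
  K (fun w1 w2 => K (fun l1 l2 => sg ((w1.length - 1) * (l2.length - 1)) •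
    S w1 l1 (fun x => S w2 l2 (fun y => Φ x y))) l) w

lemma S_K (w : List α) (l : List β) (Φ : List (α × β) → List (α × β) → M) :
    S w l (K Φ) = R w l Φ := by
  induction w generalizing l Φ with
  | nil => simp [R, K]
  | cons b w ihw =>
    induction l generalizing Φ with
    | nil => 
      simp only [R]
      rw [K_congr _ (fun _ _ => (0 : ℤ) • (0 : M)), K_zsmul] <;> simp [K]
    | cons a l ihl =>
      set Φe : List (α × β) → List (α × β) → M := fun x y => Φ ((b, a) :: x) y with hΦe
      have e1 : S (b :: w) (a :: l) (K Φ) = S (b :: w) (a :: l) (Φ [(b, a)]) +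
          sg l.length • R w (a :: l) Φe + R (b :: w) l Φe := by
        rw [S_cons, S_cons, ← ihw, ← ihl]
        simp only [K]
        rw [S_add, S_add, corner_add]
        have : corner w l (0 : M) = 0 := by cases w <;> cases l <;> simp [corner]
        rw [this]
        simp only [smul_add]
        abel
      have e2 : R w (a :: l) Φe = K (fun v1 v2 => sg ((v1.length - 1) * l.length) •
            S v1 [a] (fun x => S v2 (a :: l) (Φe x))) w +
          K (fun v1 v2 => K (fun u1 u2 => sg ((v1.length - 1) * (u2.length - 1)) •
            S v1 (a :: u1) (fun x => S v2 u2 (Φe x))) l) w := by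
        rw [R, ← K_add]
        congr 1
        funext v1 v2
        rw [K]
        simp
      have e3 : R (b :: w) l Φe = K (fun u1 u2 =>
            S [b] u1 (fun x => S (b :: w) u2 (Φe x))) l +
          K (fun v1 v2 => K (fun u1 u2 => sg (v1.length * (u2.length - 1)) •
            S (b :: v1) u1 (fun x => S v2 u2 (Φe x))) l) w := by
        rw [R, K]
        simp [sg_zero]
      have e4 : R (b :: w) (a :: l) Φ = S (b :: w) (a :: l) (Φ [(b, a)]) +
          K (fun u1 u2 => S [b] u1 (fun x => S (b :: w) u2 (Φe x))) l +
          K (fun v1 v2 => sg (v1.length * l.length) •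
            S v1 [a] (fun x => S v2 (a :: l) (Φe x))) w +
          K (fun v1 v2 => K (fun u1 u2 => sg (v1.length * (u2.length - 1)) •
            (sg u1.length • S v1 (a :: u1) (fun x => S v2 u2 (Φe x)) +
            S (b :: v1) u1 (fun x => S v2 u2 (Φe x)))) l) w := by
        rw [R, K, K, add_assoc (_ + _) (K _ w) (K _ w), ← K_add]
        congr 1
        · congr 1
          · simp [sg_zero, S_cons, corner]
          · apply K_congr
            intro u1 u2 h1 h2 _
            obtain ⟨c, u1, rfl⟩ := List.exists_cons_of_ne_nil h1
            simp [sg_zero, S_cons, corner, hΦe]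
        · apply K_congr
          intro v1 v2 h1 h2 _
          rw [K]
          congr 1
          · obtain ⟨c, v1, rfl⟩ := List.exists_cons_of_ne_nil h1
            simp [S_cons, corner, hΦe, sg_zero]
          · apply K_congr
            intro u1 u2 h3 h4 _
            rw [S_cons]
            have : corner v1 u1 (S v2 u2 (fun y => Φ [(b,a)] y)) = 0 := by
              obtain ⟨c, v1, rfl⟩ := List.exists_cons_of_ne_nil h1
              simp [corner]
            simp only [this, zero_add]
            simp [hΦe]
      rw [e1, e2, e3, e4]
      have e5 : sg l.length • K (fun v1 v2 => sg ((v1.length - 1) * l.length) •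
            S v1 [a] (fun x => S v2 (a :: l) (Φe x))) w = 
          K (fun v1 v2 => sg (v1.length * l.length) •
            S v1 [a] (fun x => S v2 (a :: l) (Φe x))) w := by
        rw [← K_zsmul]
        congr 1
        funext v1 v2
        rw [smul_smul, ← sg_add]
        congr 2
        ring
      have e6 : sg l.length • K (fun v1 v2 => K (fun u1 u2 =>
            sg ((v1.length - 1) * (u2.length - 1)) •
            S v1 (a :: u1) (fun x => S v2 u2 (Φe x))) l) w =
          K (fun v1 v2 => K (fun u1 u2 => sg (v1.length * (u2.length - 1)) •
            sg u1.length • S v1 (a :: u1) (fun x => S v2 u2 (Φe x))) l) w := by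
        rw [← K_zsmul]
        congr 1
        funext v1 v2
        rw [← K_zsmul]
        apply K_congr
        intro u1 u2 _ _ h
        rw [smul_smul, smul_smul, ← sg_add, ← sg_add]
        congr 1
        have h' : (l.length : ℤ) = u1.length + u2.length - 1 := by omega
        rw [h']
        congr 1
        ring
      rw [smul_add, e5, e6]
      simp only [smul_add, K_add]
      abel

end EZ
namespace EZ

lemma vertAffine_comp {l m n : ℕ} (u : Fin (m + 1) → Fin (n + 1)) (v : Fin (l + 1) → Fin (m + 1)) :
    (vertAffine u).comp (vertAffine v) = vertAffine (fun i => u (v i)) := by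
  ext t
  apply Subtype.ext
  funext j
  show (∑ i ∈ Finset.univ.filter (fun i => u i = j),
    ∑ i' ∈ Finset.univ.filter (fun i' => v i' = i), t.1 i') =
    ∑ i' ∈ Finset.univ.filter (fun i' => u (v i') = j), t.1 i'
  simp only [Finset.sum_filter]
  have : ∀ i : Fin (m + 1), (if u i = j then ∑ i', if v i' = i then t.1 i' else 0 else 0) =
      ∑ i', if v i' = i then (if u (v i') = j then t.1 i' else 0) else 0 := by
    intro i
    split_ifs with h
    · apply Finset.sum_congr rfl
      intro i' _
      split_ifs with h1 h2 h2
      · rfl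
      · exact absurd (h1 ▸ h) h2
      · rfl
    · symm
      apply Finset.sum_eq_zero
      intro i' _
      split_ifs with h1 h2
      · exact absurd (h1 ▸ h2) h
      · rfl
      · rfl
  simp only [this]
  rw [Finset.sum_comm]
  simp

lemma vertAffine_id {n : ℕ} : vertAffine (fun i : Fin (n + 1) => i) = ContinuousMap.id _ := by
  ext t
  apply Subtype.ext
  funext j
  show (∑ i ∈ Finset.univ.filter (fun i => i = j), t.1 i) = t.1 j
  simp [Finset.sum_filter]

/-- The simplex of the product of two simplices of `[0,1]` along a vertex path. -/
def pr {n m N : ℕ} (ρ : C(TopSimplex n, unitInterval)) (σ : C(TopSimplex m, unitInterval))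
    (v : Fin (N + 1) → Fin (n + 1) × Fin (m + 1)) : C(TopSimplex N, unitInterval) :=
  (ρ.comp (vertAffine (fun i => (v i).1))) * (σ.comp (vertAffine (fun i => (v i).2)))

lemma pr_comp {n m N N' : ℕ} (ρ : C(TopSimplex n, unitInterval))
    (σ : C(TopSimplex m, unitInterval))
    (v : Fin (N + 1) → Fin (n + 1) × Fin (m + 1)) (f : Fin (N' + 1) → Fin (N + 1)) :
    pr ρ σ (fun i => v (f i)) = (pr ρ σ v).comp (vertAffine f) := by
  simp only [pr]
  rw [← vertAffine_comp (fun i => (v i).1) f, ← vertAffine_comp (fun i => (v i).2) f]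
  rfl

lemma pr_nat {n m N n' m' : ℕ} (ρ : C(TopSimplex n, unitInterval))
    (σ : C(TopSimplex m, unitInterval))
    (f : Fin (n' + 1) → Fin (n + 1)) (g : Fin (m' + 1) → Fin (m + 1))
    (v : Fin (N + 1) → Fin (n' + 1) × Fin (m' + 1)) :
    pr (ρ.comp (vertAffine f)) (σ.comp (vertAffine g)) v =
      pr ρ σ (fun i => Prod.map f g (v i)) := by
  simp only [pr, Prod.map]
  rw [← vertAffine_comp f (fun i => (v i).1), ← vertAffine_comp g (fun i => (v i).2)]
  rfl

variable {M : Type*}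

section
variable [Zero M]
/-- Evaluate a cochain on a list of vertices of a product of simplices. -/
def ev (Y : ∀ N : ℕ, C(TopSimplex N, unitInterval) → M) {n m : ℕ} (ρ : C(TopSimplex n, unitInterval))
    (σ : C(TopSimplex m, unitInterval)) : List (Fin (n + 1) × Fin (m + 1)) → M
  | [] => 0
  | e :: L => Y L.length (pr ρ σ (fun i => (e :: L).get i))

lemma ev_of_length (Y : ∀ N : ℕ, C(TopSimplex N, unitInterval) → M) {n m : ℕ}
    (ρ : C(TopSimplex n, unitInterval))
    (σ : C(TopSimplex m, unitInterval)) (L : List (Fin (n + 1) × Fin (m + 1))) (N : ℕ)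
    (h : L.length = N + 1) : ev Y ρ σ L = Y N (pr ρ σ (fun i => L.get (i.cast h.symm))) := by
  cases L with
  | nil => simp at h
  | cons e L =>
    have h' : L.length = N := by simpa using h
    subst h'
    rfl

lemma ev_ofFn (Y : ∀ N : ℕ, C(TopSimplex N, unitInterval) → M) {n m : ℕ}
    (ρ : C(TopSimplex n, unitInterval))
    (σ : C(TopSimplex m, unitInterval)) (N : ℕ) (v : Fin (N + 1) → Fin (n + 1) × Fin (m + 1)) :
    ev Y ρ σ (List.ofFn v) = Y N (pr ρ σ v) := by
  rw [ev_of_length Y ρ σ _ N (by simp)]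
  congr 2
  funext i
  simp [-List.ofFn_succ]

lemma exists_ofFn {α : Type*} (L : List α) (N : ℕ) (h : L.length = N) :
    ∃ v : Fin N → α, L = List.ofFn v := by
  subst h
  exact ⟨L.get, (List.ofFn_get L).symm⟩

lemma exists_ofFn' {α : Type*} (L : List α) (h : L ≠ []) :
    ∃ (N : ℕ) (v : Fin (N + 1) → α), L = List.ofFn v := by
  obtain ⟨a, L, rfl⟩ := List.exists_cons_of_ne_nil h
  exact ⟨L.length, exists_ofFn _ _ rfl⟩

lemma ev_dup (Y : ∀ N : ℕ, C(TopSimplex N, unitInterval) → M)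
    (hY : ∀ (n : ℕ) (i : Fin (n + 1)) (τ : C(TopSimplex n, unitInterval)),
      Y (n + 1) (ContinuousMap.comp τ (degenMap i)) = 0) {n m : ℕ}
    (ρ : C(TopSimplex n, unitInterval))
    (σ : C(TopSimplex m, unitInterval)) (L : List (Fin (n + 1) × Fin (m + 1))) (hL : Dup L) :
    ev Y ρ σ L = 0 := by
  obtain ⟨x, a, y, rfl⟩ := hL
  have hlen : (x ++ a :: a :: y).length = (x.length + y.length + 1) + 1 := by
    simp; omega
  rw [ev_of_length Y ρ σ _ _ hlen]
  set v : Fin (x.length + y.length + 1 + 1) → Fin (n + 1) × Fin (m + 1) :=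
    fun i => (x ++ a :: a :: y).get (i.cast hlen.symm) with hv
  let i0 : Fin (x.length + y.length + 1) := ⟨x.length, by omega⟩
  have h1 : v i0.castSucc = a := by simp [hv, i0]
  have h2 : v i0.succ = a := by simp [hv, i0]
  have h3 : v = fun j => (fun j' => v (i0.succ.succAbove j')) (i0.predAbove j) := by
    funext j
    dsimp only
    by_cases hj : j = i0.succ
    · subst hj
      rw [Fin.predAbove_succ_self, Fin.succAbove_succ_self, h1, h2]
    · rw [Fin.succ_succAbove_predAbove hj]
  rw [h3, pr_comp ρ σ (fun j' => v (i0.succ.succAbove j'))]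
  exact hY _ i0 _

lemma ev_nat (Y : ∀ N : ℕ, C(TopSimplex N, unitInterval) → M) {n m n' m' : ℕ}
    (ρ : C(TopSimplex n, unitInterval)) (σ : C(TopSimplex m, unitInterval))
    (f : Fin (n' + 1) → Fin (n + 1)) (g : Fin (m' + 1) → Fin (m + 1))
    (L : List (Fin (n' + 1) × Fin (m' + 1))) :
    ev Y (ρ.comp (vertAffine f)) (σ.comp (vertAffine g)) L =
      ev Y ρ σ (L.map (Prod.map f g)) := by
  by_cases h : L = []
  · subst h; rfl
  obtain ⟨N, v, rfl⟩ := exists_ofFn' L h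
  rw [ev_ofFn, pr_nat, List.map_ofFn, ev_ofFn]
  rfl
end

section
variable [AddCommGroup M] {α : Type*}

lemma D_ofFn (N : ℕ) (v : Fin (N + 1) → α) (F : List α → M) :
    D F (List.ofFn v) = ∑ i : Fin (N + 1), sg (i : ℕ) •
      F (List.ofFn (fun j : Fin N => v (i.succAbove j))) := by
  induction N generalizing F with
  | zero => simp [D, sg_zero]
  | succ N ih =>
    rw [List.ofFn_succ, D, ih, Fin.sum_univ_succ (n := N + 1)]
    simp only [Fin.val_zero, Nat.cast_zero, sg_zero, one_smul, sub_eq_add_neg,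
      ← Finset.sum_neg_distrib]
    congr 1
    apply Finset.sum_congr rfl
    intro i _
    simp only [Fin.val_succ]
    push_cast
    rw [sg_succ, List.ofFn_succ]
    simp

lemma K_eq_sum (Φ : List α → List α → M) (L : List α) :
    K Φ L = ∑ p : Fin L.length, Φ (L.take (p + 1)) (L.drop p) := by
  induction L generalizing Φ with
  | nil => simp [K]
  | cons a L ih =>
    rw [K, ih]
    simp [Fin.sum_univ_succ]

lemma K_ofFn (N : ℕ) (v : Fin (N + 1) → α) (Φ : List α → List α → M) :
    K Φ (List.ofFn v) = ∑ p : Fin (N + 1),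
      Φ (List.ofFn (fun j : Fin ((p : ℕ) + 1) => v (Fin.castLE (by omega) j)))
        (List.ofFn (fun j : Fin (N - p + 1) =>
          v (⟨N - (N - p) + (j : ℕ), by have := j.isLt; omega⟩))) := by
  rw [K_eq_sum, ← Fin.sum_congr' _ (List.length_ofFn (f := v)).symm]
  apply Finset.sum_congr rfl
  intro p _
  congr 1
  · apply List.ext_getElem
    · simp [-List.ofFn_succ]; omega
    · intro i h1 h2
      simp [-List.ofFn_succ]
  · apply List.ext_getElem
    · simp [-List.ofFn_succ]; omega
    · intro i h1 h2
      simp [-List.ofFn_succ]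
      congr 1
      ext
      simp [-List.ofFn_succ]
      omega

lemma S_single {β : Type*} (b : α) (l : List β) (hl : l ≠ []) (φ : List (α × β) → M) :
    S [b] l φ = φ (l.map (fun a => (b, a))) := by
  induction l generalizing φ with
  | nil => simp at hl
  | cons a l ih =>
    rw [S_cons]
    cases l with
    | nil => simp [corner]
    | cons c l =>
      rw [ih (by simp)]
      simp [corner]

/-- The Eilenberg-Zilber pullback of a cochain. -/
def XX (Y : ∀ N : ℕ, C(TopSimplex N, unitInterval) → M) {n m : ℕ} (ρ : C(TopSimplex n, unitInterval))
    (σ : C(TopSimplex m, unitInterval)) : M :=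
  S (List.ofFn (fun i : Fin (n + 1) => i)) (List.ofFn (fun i : Fin (m + 1) => i)) (ev Y ρ σ)

lemma S_ofFn (Y : ∀ N : ℕ, C(TopSimplex N, unitInterval) → M) {n m n' m' : ℕ}
    (ρ : C(TopSimplex n, unitInterval)) (σ : C(TopSimplex m, unitInterval))
    (f : Fin (n' + 1) → Fin (n + 1)) (g : Fin (m' + 1) → Fin (m + 1)) :
    S (List.ofFn f) (List.ofFn g) (ev Y ρ σ) =
      XX Y (ρ.comp (vertAffine f)) (σ.comp (vertAffine g)) := by
  have h1 : List.ofFn f = (List.ofFn (fun i => i)).map f := by rw [List.map_ofFn]; rfl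
  have h2 : List.ofFn g = (List.ofFn (fun i => i)).map g := by rw [List.map_ofFn]; rfl
  rw [h1, h2, S_map, XX]
  congr 1
  funext L
  rw [ev_nat]

lemma S_ofFn_left (Y : ∀ N : ℕ, C(TopSimplex N, unitInterval) → M) {n m n' : ℕ}
    (ρ : C(TopSimplex n, unitInterval)) (σ : C(TopSimplex m, unitInterval))
    (f : Fin (n' + 1) → Fin (n + 1)) :
    S (List.ofFn f) (List.ofFn (fun i => i)) (ev Y ρ σ) =
      XX Y (ρ.comp (vertAffine f)) σ := by
  rw [S_ofFn, vertAffine_id]; rfl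

lemma S_ofFn_right (Y : ∀ N : ℕ, C(TopSimplex N, unitInterval) → M) {n m m' : ℕ}
    (ρ : C(TopSimplex n, unitInterval)) (σ : C(TopSimplex m, unitInterval))
    (g : Fin (m' + 1) → Fin (m + 1)) :
    S (List.ofFn (fun i => i)) (List.ofFn g) (ev Y ρ σ) =
      XX Y ρ (σ.comp (vertAffine g)) := by
  rw [S_ofFn, vertAffine_id]; rfl

lemma dup_predAbove {n : ℕ} (i : Fin (n + 1)) :
    Dup (List.ofFn (fun j : Fin (n + 1 + 1) => i.predAbove j)) := by
  have key : ∀ (L : List (Fin (n + 1))) (p : ℕ) (h : p + 1 < L.length),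
      L[p] = L[p + 1] → Dup L := by
    intro L p h e
    refine ⟨L.take p, L[p], L.drop (p + 2), ?_⟩
    conv_lhs => rw [← List.take_append_drop p L, List.drop_eq_getElem_cons (by omega),
      List.drop_eq_getElem_cons h]
    rw [← e]
  refine key _ i (by rw [List.length_ofFn]; omega) ?_
  simp only [List.getElem_ofFn]
  have e1 : (⟨(i : ℕ), by omega⟩ : Fin (n + 1 + 1)) = i.castSucc := rfl
  have e2 : (⟨(i : ℕ) + 1, by omega⟩ : Fin (n + 1 + 1)) = i.succ := rfl
  rw [e1, e2]
  simp

variable (Y : ∀ N : ℕ, C(TopSimplex N, unitInterval) → M)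

lemma XX_degen_right (hY : ∀ (n : ℕ) (i : Fin (n + 1)) (τ : C(TopSimplex n, unitInterval)),
      Y (n + 1) (ContinuousMap.comp τ (degenMap i)) = 0) {n m : ℕ}
    (ρ : C(TopSimplex n, unitInterval)) (τ : C(TopSimplex m, unitInterval)) (i : Fin (m + 1)) :
    XX Y ρ (τ.comp (degenMap i)) = 0 := by
  rw [degenMap, ← S_ofFn_right]
  exact S_dup_right _ _ (dup_predAbove i) _ (ev_dup Y hY _ _)

lemma XX_degen_left (hY : ∀ (n : ℕ) (i : Fin (n + 1)) (τ : C(TopSimplex n, unitInterval)),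
      Y (n + 1) (ContinuousMap.comp τ (degenMap i)) = 0) {n m : ℕ}
    (ρ : C(TopSimplex n, unitInterval)) (τ : C(TopSimplex m, unitInterval)) (i : Fin (n + 1)) :
    XX Y (ρ.comp (degenMap i)) τ = 0 := by
  rw [degenMap, ← S_ofFn_left]
  exact S_dup_left _ _ (dup_predAbove i) _ (ev_dup Y hY _ _)

lemma XX_congr (Z : ∀ N : ℕ, C(TopSimplex N, unitInterval) → M) {n m : ℕ}
    (h : ∀ σ, Y (n + m) σ = Z (n + m) σ)
    (ρ : C(TopSimplex n, unitInterval)) (σ : C(TopSimplex m, unitInterval)) :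
    XX Y ρ σ = XX Z ρ σ := by
  apply S_congr
  intro L hL _
  have hL' : L.length = n + m + 1 := by simp at hL; omega
  rw [ev_of_length _ _ _ _ _ hL', ev_of_length _ _ _ _ _ hL', h]

lemma XX_zero {n m : ℕ} (h : ∀ σ, Y (n + m) σ = 0)
    (ρ : C(TopSimplex n, unitInterval)) (σ : C(TopSimplex m, unitInterval)) :
    XX Y ρ σ = 0 := by
  apply S_eq_zero
  intro L hL _
  have hL' : L.length = n + m + 1 := by simp at hL; omega
  rw [ev_of_length _ _ _ _ _ hL', h]

lemma XX_mem (P : AddSubgroup M) {n m : ℕ} (h : ∀ σ, Y (n + m) σ ∈ P)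
    (ρ : C(TopSimplex n, unitInterval)) (σ : C(TopSimplex m, unitInterval)) :
    XX Y ρ σ ∈ P := by
  apply S_mem
  intro L hL _
  have hL' : L.length = n + m + 1 := by simp at hL; omega
  rw [ev_of_length _ _ _ _ _ hL']
  exact h _

lemma ev_add (Z : ∀ N : ℕ, C(TopSimplex N, unitInterval) → M) {n m : ℕ}
    (ρ : C(TopSimplex n, unitInterval)) (σ : C(TopSimplex m, unitInterval)) (L) :
    ev (fun N τ => Y N τ + Z N τ) ρ σ L = ev Y ρ σ L + ev Z ρ σ L := by
  cases L <;> simp [ev]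

lemma XX_add (Z : ∀ N : ℕ, C(TopSimplex N, unitInterval) → M) {n m : ℕ}
    (ρ : C(TopSimplex n, unitInterval)) (σ : C(TopSimplex m, unitInterval)) :
    XX (fun N τ => Y N τ + Z N τ) ρ σ = XX Y ρ σ + XX Z ρ σ := by
  rw [XX, XX, XX, ← S_add]
  congr 1
  funext L
  rw [ev_add]

lemma XX_map {M' : Type*} [AddCommGroup M'] (g : M →+ M') {n m : ℕ}
    (ρ : C(TopSimplex n, unitInterval)) (σ : C(TopSimplex m, unitInterval)) :
    XX (fun N τ => g (Y N τ)) ρ σ = g (XX Y ρ σ) := by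
  rw [XX, XX, ← S_map_hom]
  congr 1
  funext L
  cases L <;> simp [ev]

lemma XX_point {m : ℕ} (ρ : C(TopSimplex 0, unitInterval)) (σ : C(TopSimplex m, unitInterval)) :
    XX Y ρ σ = Y m (pr ρ σ (fun j => (0, j))) := by
  rw [XX]
  simp only [List.ofFn_succ (n := 0), List.ofFn_zero]
  rw [S_single _ _ (by simp), List.map_ofFn, ev_ofFn]
  rfl

lemma XX_const1 {m : ℕ} (σ : C(TopSimplex m, unitInterval)) : XX Y (ContinuousMap.const (TopSimplex 0) 1) σ = Y m σ := by
  rw [XX_point]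
  congr 1
  simp only [pr, vertAffine_id]
  ext t
  simp

lemma XX_const0_zero (σ : C(TopSimplex 0, unitInterval)) : XX Y (ContinuousMap.const (TopSimplex 0) 0) σ = Y 0 (ContinuousMap.const (TopSimplex 0) 0) := by
  rw [XX_point]
  congr 1
  simp only [pr]
  ext t
  simp

lemma XX_const0_succ (hY : ∀ (n : ℕ) (i : Fin (n + 1)) (τ : C(TopSimplex n, unitInterval)),
      Y (n + 1) (ContinuousMap.comp τ (degenMap i)) = 0)
    {m : ℕ} (σ : C(TopSimplex (m + 1), unitInterval)) : XX Y (ContinuousMap.const (TopSimplex 0) 0) σ = 0 := by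
  rw [XX_point, ← hY m 0 (ContinuousMap.const _ 0)]
  congr 1
  simp only [pr]
  ext t
  simp

/-- Boundary of the EZ pullback: the face part. -/
lemma S_D_ev {n m : ℕ}
    (ρ : C(TopSimplex n, unitInterval)) (σ : C(TopSimplex m, unitInterval)) :
    S (List.ofFn (fun i : Fin (n + 1) => i)) (List.ofFn (fun i : Fin (m + 1) => i))
      (D (ev Y ρ σ)) =
    D (fun u => S (List.ofFn (fun i : Fin (n + 1) => i)) u (ev Y ρ σ))
      (List.ofFn (fun i : Fin (m + 1) => i)) +
    sg m • D (fun v => S v (List.ofFn (fun i : Fin (m + 1) => i)) (ev Y ρ σ))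
      (List.ofFn (fun i : Fin (n + 1) => i)) := by
  rw [S_D]
  have : ev Y ρ σ [] = 0 := rfl
  have h0 : ∀ (w : List (Fin (n + 1))) (l : List (Fin (m + 1))), corner1 w l (0 : M) = 0 := by
    intro w l
    rcases w with _ | ⟨_, _ | ⟨_, _⟩⟩ <;> rcases l with _ | ⟨_, _ | ⟨_, _⟩⟩ <;>
      simp [corner1, corner]
  rw [this, h0, add_zero]
  congr 2
  simp only [List.length_ofFn]
  exact sg_congr 1 (by push_cast; ring)

lemma D_left_zero {m : ℕ}
    (ρ : C(TopSimplex 0, unitInterval)) (σ : C(TopSimplex m, unitInterval)) :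
    D (fun v => S v (List.ofFn (fun i : Fin (m + 1) => i)) (ev Y ρ σ))
      (List.ofFn (fun i : Fin (0 + 1) => i)) = 0 := by
  rw [D_ofFn]
  simp

lemma D_right_zero {n : ℕ}
    (ρ : C(TopSimplex n, unitInterval)) (σ : C(TopSimplex 0, unitInterval)) :
    D (fun u => S (List.ofFn (fun i : Fin (n + 1) => i)) u (ev Y ρ σ))
      (List.ofFn (fun i : Fin (0 + 1) => i)) = 0 := by
  rw [D_ofFn]
  simp

lemma D_left_succ {n m : ℕ}
    (ρ : C(TopSimplex (n + 1), unitInterval)) (σ : C(TopSimplex m, unitInterval)) :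
    D (fun v => S v (List.ofFn (fun i : Fin (m + 1) => i)) (ev Y ρ σ))
      (List.ofFn (fun i : Fin (n + 1 + 1) => i)) =
    ∑ i : Fin (n + 2), sg (i : ℕ) • XX Y (ρ.comp (faceMap i)) σ := by
  rw [D_ofFn]
  apply Finset.sum_congr rfl
  intro i _
  rw [S_ofFn_left]
  rfl

lemma D_right_succ {n m : ℕ}
    (ρ : C(TopSimplex n, unitInterval)) (σ : C(TopSimplex (m + 1), unitInterval)) :
    D (fun u => S (List.ofFn (fun i : Fin (n + 1) => i)) u (ev Y ρ σ))
      (List.ofFn (fun i : Fin (m + 1 + 1) => i)) =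
    ∑ i : Fin (m + 2), sg (i : ℕ) • XX Y ρ (σ.comp (faceMap i)) := by
  rw [D_ofFn]
  apply Finset.sum_congr rfl
  intro i _
  rw [S_ofFn_right]
  rfl

lemma XX_d (Z : ∀ N : ℕ, C(TopSimplex N, unitInterval) → M) (d : M →+ M) (i : ℤ)
    (h0 : ∀ σ, Z 0 σ = d (Y 0 σ))
    (h1 : ∀ (n : ℕ) (σ : C(TopSimplex (n + 1), unitInterval)), Z (n + 1) σ = d (Y (n + 1) σ) +
      sg (i - n) • ∑ i' : Fin (n + 2), sg (i' : ℕ) • Y n (ContinuousMap.comp σ (faceMap i')))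
    {n m : ℕ}
    (ρ : C(TopSimplex n, unitInterval)) (σ : C(TopSimplex m, unitInterval)) :
    XX Z ρ σ = d (XX Y ρ σ) + sg (i - (n + m + 1)) •
      (D (fun u => S (List.ofFn (fun i : Fin (n + 1) => i)) u (ev Y ρ σ))
        (List.ofFn (fun i : Fin (m + 1) => i)) +
      sg m • D (fun v => S v (List.ofFn (fun i : Fin (m + 1) => i)) (ev Y ρ σ))
        (List.ofFn (fun i : Fin (n + 1) => i))) := by
  rw [← S_D_ev, XX, XX, ← S_map_hom, ← S_zsmul, ← S_add]
  apply S_congr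
  intro L hL hn
  have hL' : (n : ℤ) + m + 1 = L.length := by simp at hL; push_cast [← hL]; omega
  rw [hL']
  obtain ⟨N, v, rfl⟩ := exists_ofFn' L hn
  rw [ev_ofFn, ev_ofFn, D_ofFn]
  cases N with
  | zero => simp [h0, ev]
  | succ N =>
    rw [h1]
    congr 2
    · simp only [List.length_ofFn]
      exact sg_congr 1 (by push_cast; ring)
    · apply Finset.sum_congr rfl
      intro j _
      rw [ev_ofFn, pr_comp ρ σ v (j.succAbove)]
      rfl

end

section
variable {Q : Type*} [Ring Q]

lemma XX_mul (Y₁ Y₂ Z : ∀ N : ℕ, C(TopSimplex N, unitInterval) → Q) (j : ℤ)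
    (h : ∀ (n : ℕ) (σ : C(TopSimplex n, unitInterval)), Z n σ = ∑ p : Fin (n + 1),
      sg (((p : ℕ) : ℤ) * (j - ((n : ℤ) - ((p : ℕ) : ℤ)))) •
        (Y₁ (p : ℕ) (ContinuousMap.comp σ (frontMap (p : ℕ) n (Nat.le_of_lt_succ p.isLt))) *
          Y₂ (n - (p : ℕ)) (ContinuousMap.comp σ (backMap (n - (p : ℕ)) n (by omega)))))
    {n m : ℕ} (ρ : C(TopSimplex n, unitInterval)) (σ : C(TopSimplex m, unitInterval)) :
    XX Z ρ σ = ∑ p : Fin (n + 1), ∑ r : Fin (m + 1),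
      sg (((p : ℕ) : ℤ) * (j - ((n : ℤ) - ((p : ℕ) : ℤ)))) •
      sg (((r : ℕ) : ℤ) * ((j - ((n : ℤ) - ((p : ℕ) : ℤ))) - ((m : ℤ) - ((r : ℕ) : ℤ)))) •
      (XX Y₁ (ρ.comp (frontMap (p : ℕ) n (Nat.le_of_lt_succ p.isLt)))
          (σ.comp (frontMap (r : ℕ) m (Nat.le_of_lt_succ r.isLt))) *
        XX Y₂ (ρ.comp (backMap (n - (p : ℕ)) n (by omega)))
          (σ.comp (backMap (m - (r : ℕ)) m (by omega)))) := by
  have e1 : XX Z ρ σ = S (List.ofFn (fun i : Fin (n + 1) => i))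
      (List.ofFn (fun i : Fin (m + 1) => i))
      (K (fun x y => sg (((x.length : ℤ) - 1) * (j - ((y.length : ℤ) - 1))) •
        (ev Y₁ ρ σ x * ev Y₂ ρ σ y))) := by
    apply S_congr
    intro L _ hn
    obtain ⟨N, v, rfl⟩ := exists_ofFn' L hn
    rw [ev_ofFn, h, K_ofFn]
    apply Finset.sum_congr rfl
    intro p _
    rw [ev_ofFn, ev_ofFn]
    have hpN := Nat.le_of_lt_succ p.isLt
    have b1 : sg (((p : ℕ) : ℤ) * (j - ((N : ℤ) - ((p : ℕ) : ℤ)))) =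
        sg ((((List.ofFn fun i : Fin ((p : ℕ) + 1) => v (Fin.castLE (by omega) i)).length : ℤ) - 1)
          * (j - (((N - (p : ℕ) + 1 : ℕ) : ℤ) - 1))) := by
      simp only [List.length_ofFn]
      push_cast [hpN]
      refine sg_congr 0 ?_
      ring
    rw [b1]
    congr 1
    · simp only [List.length_ofFn]
    · congr 1
      · exact congrArg _ (pr_comp ρ σ v _).symm
      · exact congrArg _ (pr_comp ρ σ v _).symm
  rw [e1, S_K, R, K_ofFn]
  apply Finset.sum_congr rfl
  intro p _
  rw [K_ofFn]
  apply Finset.sum_congr rfl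
  intro r _
  have hp := Nat.le_of_lt_succ p.isLt
  have hr := Nat.le_of_lt_succ r.isLt
  have e2 : ∀ {n1 n2 m1 m2 : ℕ} (f1 : Fin (n1 + 1) → Fin (n + 1)) (f2 : Fin (n2 + 1) → Fin (n + 1))
      (g1 : Fin (m1 + 1) → Fin (m + 1)) (g2 : Fin (m2 + 1) → Fin (m + 1)),
      S (List.ofFn f1) (List.ofFn g1) (fun x => S (List.ofFn f2) (List.ofFn g2) (fun y =>
        sg (((x.length : ℤ) - 1) * (j - ((y.length : ℤ) - 1))) •
        (ev Y₁ ρ σ x * ev Y₂ ρ σ y))) =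
      sg (((n1 : ℤ) + m1) * (j - ((n2 : ℤ) + m2))) •
      (XX Y₁ (ρ.comp (vertAffine f1)) (σ.comp (vertAffine g1)) *
        XX Y₂ (ρ.comp (vertAffine f2)) (σ.comp (vertAffine g2))) := by
    intro n1 n2 m1 m2 f1 f2 g1 g2
    rw [← S_ofFn, ← S_ofFn]
    have a1 : S (List.ofFn f1) (List.ofFn g1) (ev Y₁ ρ σ) *
        S (List.ofFn f2) (List.ofFn g2) (ev Y₂ ρ σ) =
        S (List.ofFn f1) (List.ofFn g1) (fun x => S (List.ofFn f2) (List.ofFn g2) (fun y =>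
          ev Y₁ ρ σ x * ev Y₂ ρ σ y)) := by
      have := S_map_hom (AddMonoidHom.mulRight (S (List.ofFn f2) (List.ofFn g2) (ev Y₂ ρ σ)))
        (List.ofFn f1) (List.ofFn g1) (ev Y₁ ρ σ)
      simp only [AddMonoidHom.coe_mulRight] at this
      rw [← this]
      congr 1
      funext x
      exact (S_map_hom (AddMonoidHom.mulLeft (ev Y₁ ρ σ x)) _ _ _).symm
    rw [a1, ← S_zsmul]
    apply S_congr
    intro x hx _
    rw [← S_zsmul]
    apply S_congr
    intro y hy _
    simp only [List.length_ofFn] at hx hy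
    congr 2
    have hx' : (x.length : ℤ) = n1 + m1 + 1 := by omega
    have hy' : (y.length : ℤ) = n2 + m2 + 1 := by omega
    rw [hx', hy']
    ring
  rw [e2, smul_smul, smul_smul, ← sg_add, ← sg_add]
  congr 1
  simp only [List.length_ofFn]
  push_cast [hp, hr]
  refine sg_congr 0 ?_
  ring

end
end EZ

namespace EZ
noncomputable section
variable {k : Type} [CommRing k]

/-- Packaged form of the data in `IsCochainTensorI`. -/
structure CT (A T : DGA k) where
  E : ∀ n : ℕ, C(TopSimplex n, unitInterval) → (T.A →ₗ[k] A.A)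
  degen : ∀ p (n : ℕ) (i : Fin (n + 1)) (τ : C(TopSimplex n, unitInterval)),
    E (n + 1) (τ.comp (degenMap i)) p = 0
  mem : ∀ (m : ℤ), ∀ p ∈ T.gr m, ∀ (n : ℕ) σ, E n σ p ∈ A.gr (m - (n : ℤ))
  inj : ∀ (m : ℤ), ∀ p ∈ T.gr m, (∀ (n : ℕ) σ, E n σ p = 0) → p = 0
  surj : ∀ (m : ℤ) (Y : ∀ n : ℕ, C(TopSimplex n, unitInterval) → A.A),
      (∀ (n : ℕ) σ, Y n σ ∈ A.gr (m - (n : ℤ))) →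
      (∀ (n : ℕ) (i : Fin (n + 1)) (τ : C(TopSimplex n, unitInterval)),
        Y (n + 1) (τ.comp (degenMap i)) = 0) →
      ∃ p ∈ T.gr m, ∀ (n : ℕ) σ, E n σ p = Y n σ
  one0 : ∀ σ, E 0 σ 1 = 1
  one1 : ∀ (n : ℕ) σ, E (n + 1) σ 1 = 0
  mul : ∀ (i j : ℤ), ∀ p ∈ T.gr i, ∀ q ∈ T.gr j, ∀ (n : ℕ) (σ : C(TopSimplex n, unitInterval)),
      E n σ (p * q) =
        ∑ r : Fin (n + 1), sg (((r : ℕ) : ℤ) * (j - ((n : ℤ) - ((r : ℕ) : ℤ)))) •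
            (E (r : ℕ) (σ.comp (frontMap (r : ℕ) n (Nat.le_of_lt_succ r.isLt))) p *
              E (n - (r : ℕ)) (σ.comp (backMap (n - (r : ℕ)) n (by omega))) q)
  d0 : ∀ (i : ℤ), ∀ p ∈ T.gr i, ∀ σ : C(TopSimplex 0, unitInterval), E 0 σ (T.d p) = A.d (E 0 σ p)
  d1 : ∀ (i : ℤ), ∀ p ∈ T.gr i, ∀ (n : ℕ) (σ : C(TopSimplex (n + 1), unitInterval)),
      E (n + 1) σ (T.d p) = A.d (E (n + 1) σ p) +
        sg (i - n) • ∑ i' : Fin (n + 2), sg (i' : ℕ) • E n (σ.comp (faceMap i')) p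

lemma sg_nat (i : ℕ) : sg (i : ℤ) = (((-1 : ℤˣ) ^ i : ℤˣ) : ℤ) := by
  simp [sg]

lemma exists_CT {A T : DGA k} (h : IsCochainTensorI A T) : Nonempty (CT A T) := by
  obtain ⟨E, h1, h2, h3, h4, h5, h6, h7, h8, h9, h10⟩ := h
  exact ⟨{
    E := fun n σ => ⟨⟨fun p => E p n σ, fun p q => h1 p q n σ⟩, fun c p => h2 c p n σ⟩
    degen := h3
    mem := h4
    inj := h5
    surj := h6
    one0 := h7
    one1 := h8
    mul := h9
    d0 := fun i p hp => (h10 i p hp).1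
    d1 := fun i p hp n σ => by
      simp only [sg_nat]
      exact (h10 i p hp).2 n σ }⟩

/-- Additive maps agreeing on homogeneous elements agree. -/
lemma hom_ext {B : DGA k} {M : Type*} [AddCommGroup M] (u v : B.A →+ M)
    (h : ∀ i, ∀ y ∈ B.gr i, u y = v y) (y : B.A) : u y = v y := by
  induction y using DirectSum.Decomposition.inductionOn B.gr with
  | zero => simp
  | homogeneous y => exact h _ _ y.2
  | add a b ha hb => rw [map_add, map_add, ha, hb]

/-- Biadditive version. -/
lemma hom_ext₂ {B : DGA k} {M : Type*} [AddCommGroup M] (u v : B.A →+ B.A →+ M)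
    (h : ∀ i j, ∀ y ∈ B.gr i, ∀ z ∈ B.gr j, u y z = v y z) (y z : B.A) : u y z = v y z := by
  have := hom_ext u v (fun i y hy => AddMonoidHom.ext fun z =>
    hom_ext (u y) (v y) (fun j z hz => h i j y hy z hz) z) y
  rw [this]

/-- An additive, homogeneous-multiplicative map is multiplicative. -/
lemma mul_ext {B C : DGA k} (u : B.A →ₗ[k] C.A)
    (h : ∀ i j, ∀ y ∈ B.gr i, ∀ z ∈ B.gr j, u (y * z) = u y * u z) (y z : B.A) :
    u (y * z) = u y * u z := by
  exact hom_ext₂ (((AddMonoidHom.compHom u.toAddMonoidHom).comp AddMonoidHom.mul))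
    ((AddMonoidHom.compl₂ (AddMonoidHom.mul.comp u.toAddMonoidHom) u.toAddMonoidHom)) h y z

namespace CT
variable {A T : DGA k} (X : CT A T)

lemma ext {m : ℤ} {p q : T.A} (hp : p ∈ T.gr m) (hq : q ∈ T.gr m)
    (h : ∀ n σ, X.E n σ p = X.E n σ q) : p = q := by
  rw [← sub_eq_zero]
  refine X.inj m _ (sub_mem hp hq) ?_
  intro n σ
  rw [map_sub, h, sub_self]

lemma lift (B : DGA k) (s : ℤ) (F : ∀ n : ℕ, C(TopSimplex n, unitInterval) → (B.A →ₗ[k] A.A))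
    (hd : ∀ p (n : ℕ) (i : Fin (n + 1)) (τ : C(TopSimplex n, unitInterval)),
      F (n + 1) (τ.comp (degenMap i)) p = 0)
    (hm : ∀ (i : ℤ), ∀ p ∈ B.gr i, ∀ (n : ℕ) σ, F n σ p ∈ A.gr (i + s - (n : ℤ))) :
    ∃ G : B.A →ₗ[k] T.A, (∀ i, ∀ y ∈ B.gr i, G y ∈ T.gr (i + s)) ∧
      ∀ y n σ, X.E n σ (G y) = F n σ y := by
  have key : ∀ i, ∀ y : B.gr i, ∃ p ∈ T.gr (i + s), ∀ (n : ℕ) σ, X.E n σ p = F n σ y := by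
    intro i y
    exact X.surj (i + s) (fun n σ => F n σ y) (fun n σ => hm i y y.2 n σ)
      (fun n i τ => hd y n i τ)
  choose G hG1 hG2 using key
  let Gl : ∀ i, B.gr i →ₗ[k] T.A := fun i =>
    { toFun := G i
      map_add' := fun a b => by
        refine X.ext (hG1 i _) (add_mem (hG1 i a) (hG1 i b)) ?_
        intro n σ
        simp [hG2]
      map_smul' := fun c a => by
        refine X.ext (hG1 i _) (Submodule.smul_mem _ c (hG1 i a)) ?_
        intro n σ
        simp [hG2] }
  let GG : B.A →ₗ[k] T.A :=
    (DirectSum.toModule k ℤ T.A Gl) ∘ₗ (DirectSum.decomposeLinearEquiv B.gr).toLinearMap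
  have hGG : ∀ i, ∀ y : B.gr i, GG y = G i y := by
    intro i y
    have : (DirectSum.decomposeLinearEquiv B.gr) (y : B.A) = DirectSum.lof k ℤ _ i y := by
      exact DirectSum.decompose_coe B.gr y
    simp only [GG, LinearMap.comp_apply, LinearEquiv.coe_coe]
    rw [this, DirectSum.toModule_lof]
    rfl
  refine ⟨GG, ?_, ?_⟩
  · intro i y hy
    have := hGG i ⟨y, hy⟩
    simp only at this
    rw [this]
    exact hG1 _ _
  · intro y n σ
    refine hom_ext (X.E n σ ∘ₗ GG).toAddMonoidHom (F n σ).toAddMonoidHom ?_ y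
    intro i y hy
    have := hGG i ⟨y, hy⟩
    simp only at this
    change X.E n σ (GG y) = F n σ y
    rw [this, hG2]

/-- The value of a cochain at the point `0`. -/
def g : DGAHom T A where
  toFun := AlgHom.ofLinearMap (X.E 0 (ContinuousMap.const _ 0)) (X.one0 _) (by
    refine mul_ext _ ?_
    intro i j y hy z hz
    rw [X.mul i j y hy z hz]
    simp [sg_zero])
  map_gr := fun i a ha => by
    have := X.mem i a ha 0 (ContinuousMap.const _ 0)
    simpa using this
  map_d := fun a => by
    refine hom_ext (X.E 0 (ContinuousMap.const _ 0) ∘ₗ T.d).toAddMonoidHom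
      (A.d ∘ₗ X.E 0 (ContinuousMap.const _ 0)).toAddMonoidHom ?_ a
    intro i y hy
    exact X.d0 i y hy _

lemma g_apply (y : T.A) : X.g.toFun y = X.E 0 (ContinuousMap.const _ 0) y := rfl

/-- components of the constant cochain map -/
def cF (A : DGA k) : ∀ n : ℕ, C(TopSimplex n, unitInterval) → (A.A →ₗ[k] A.A)
  | 0, _ => LinearMap.id
  | _ + 1, _ => 0

lemma exists_f : ∃ f : DGAHom A T, ∀ y n σ, X.E n σ (f.toFun y) = cF A n σ y := by
  obtain ⟨G, hG1, hG2⟩ := X.lift A 0 (cF A) (fun p n i τ => rfl) (by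
    intro i p hp n σ
    cases n with
    | zero => simpa [cF] using hp
    | succ n => simp [cF])
  have hG1' : ∀ i, ∀ y ∈ A.gr i, G y ∈ T.gr i := fun i y hy => by
    simpa using hG1 i y hy
  refine ⟨{ toFun := AlgHom.ofLinearMap G ?_ ?_, map_gr := hG1', map_d := ?_ }, ?_⟩
  · refine X.ext (hG1' 0 1 SetLike.GradedOne.one_mem) SetLike.GradedOne.one_mem ?_
    intro n σ
    rw [hG2]
    cases n with
    | zero => rw [X.one0]; rfl
    | succ n => rw [X.one1]; rfl
  · refine mul_ext _ ?_
    intro i j y hy z hz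
    refine X.ext (hG1' (i + j) _ (SetLike.GradedMul.mul_mem hy hz))
      (SetLike.GradedMul.mul_mem (hG1' i y hy) (hG1' j z hz)) ?_
    intro n σ
    rw [hG2, X.mul i j _ (hG1' i y hy) _ (hG1' j z hz)]
    simp only [hG2]
    cases n with
    | zero => simp [sg_zero, cF]
    | succ n =>
      symm
      rw [show cF A (n + 1) σ (y * z) = 0 from rfl]
      apply Finset.sum_eq_zero
      intro r _
      rcases r with ⟨r, hr⟩
      cases r with
      | zero => simp [cF]
      | succ r => simp [cF]
  · intro a
    refine hom_ext (G ∘ₗ A.d).toAddMonoidHom (T.d ∘ₗ G).toAddMonoidHom ?_ a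
    intro i y hy
    refine X.ext (hG1' (i + 1) _ (A.d_mem i y hy)) (T.d_mem i _ (hG1' i y hy)) ?_
    intro n σ
    change X.E n σ (G (A.d y)) = X.E n σ (T.d (G y))
    rw [hG2]
    cases n with
    | zero =>
      refine Eq.trans ?_ (X.d0 i _ (hG1' i y hy) σ).symm
      rw [hG2]; rfl
    | succ n =>
      refine Eq.trans ?_ (X.d1 i _ (hG1' i y hy) n σ).symm
      simp only [hG2]
      rw [show cF A (n + 1) σ (A.d y) = 0 from rfl, show cF A (n + 1) σ y = 0 from rfl]
      cases n with
      | zero => simp [cF, Fin.sum_univ_two, sg_zero, sg_one]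
      | succ n => simp [cF]
  · exact hG2

/-- components of the homotopy -/
def hF {n : ℕ} (ρ : C(TopSimplex n, unitInterval)) (m : ℕ) (σ : C(TopSimplex m, unitInterval)) :
    T.A →ₗ[k] A.A where
  toFun y := XX (fun N τ => X.E N τ y) ρ σ
  map_add' a b := by
    simp only [map_add]
    exact XX_add _ _ _ _
  map_smul' c a := by
    simp only [map_smul]
    exact XX_map (fun N τ => X.E N τ a) (DistribSMul.toAddMonoidHom A.A c) ρ σ

lemma exists_H {n : ℕ} (ρ : C(TopSimplex n, unitInterval)) :
    ∃ G : T.A →ₗ[k] T.A, (∀ i, ∀ y ∈ T.gr i, G y ∈ T.gr (i - n)) ∧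
      ∀ y m σ, X.E m σ (G y) = XX (fun N τ => X.E N τ y) ρ σ := by
  refine X.lift T (-n) (X.hF ρ) ?_ ?_
  · intro p m i τ
    exact XX_degen_right _ (fun n i τ => X.degen p n i τ) ρ τ i
  · intro i p hp m σ
    refine XX_mem _ (A.gr (i + -n - m)).toAddSubgroup ?_ ρ σ
    intro τ
    have := X.mem i p hp _ τ
    have e : i - ((n + m : ℕ) : ℤ) = i + -n - m := by push_cast; ring
    rw [e] at this
    exact this

def H {n : ℕ} (ρ : C(TopSimplex n, unitInterval)) : T.A →ₗ[k] T.A := (X.exists_H ρ).choose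

lemma H_mem {n : ℕ} (ρ : C(TopSimplex n, unitInterval)) {i} {y} (hy : y ∈ T.gr i) :
    X.H ρ y ∈ T.gr (i - n) := (X.exists_H ρ).choose_spec.1 i y hy

lemma E_H {n : ℕ} (ρ : C(TopSimplex n, unitInterval)) (y) (m) (σ) :
    X.E m σ (X.H ρ y) = XX (fun N τ => X.E N τ y) ρ σ := (X.exists_H ρ).choose_spec.2 y m σ

lemma H_degen (y : T.A) (n : ℕ) (i : Fin (n + 1)) (τ : C(TopSimplex n, unitInterval)) :
    X.H (τ.comp (degenMap i)) y = 0 := by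
  refine hom_ext (X.H (τ.comp (degenMap i))).toAddMonoidHom 0 ?_ y
  intro j y hy
  refine X.ext (X.H_mem _ hy) (zero_mem _) ?_
  intro m σ
  refine Eq.trans ?_ (map_zero (X.E m σ)).symm
  exact (X.E_H _ _ _ _).trans (XX_degen_left _ (fun n i τ => X.degen y n i τ) τ σ i)

lemma H_one0 (σ : C(TopSimplex 0, unitInterval)) : X.H σ 1 = 1 := by
  have h1 : (1 : T.A) ∈ T.gr 0 := SetLike.GradedOne.one_mem
  refine X.ext (m := 0) (by simpa using X.H_mem σ h1) h1 ?_
  intro m τ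
  rw [E_H, XX_point]
  cases m with
  | zero => rw [X.one0, X.one0]
  | succ m => rw [X.one1, X.one1]

lemma H_one1 (n : ℕ) (σ : C(TopSimplex (n + 1), unitInterval)) : X.H σ 1 = 0 := by
  have h1 : (1 : T.A) ∈ T.gr 0 := SetLike.GradedOne.one_mem
  refine X.ext (X.H_mem σ h1) (zero_mem _) ?_
  intro m τ
  rw [E_H, map_zero]
  refine XX_zero _ ?_ _ _
  have : n + 1 + m = (n + m) + 1 := by omega
  rw [this]
  exact fun σ => X.one1 _ _

lemma H_mul (i j : ℤ) (a) (ha : a ∈ T.gr i) (b) (hb : b ∈ T.gr j) (n : ℕ)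
    (ρ : C(TopSimplex n, unitInterval)) :
    X.H ρ (a * b) = ∑ p : Fin (n + 1),
      sg (((p : ℕ) : ℤ) * (j - ((n : ℤ) - ((p : ℕ) : ℤ)))) •
        (X.H (ρ.comp (frontMap (p : ℕ) n (Nat.le_of_lt_succ p.isLt))) a *
          X.H (ρ.comp (backMap (n - (p : ℕ)) n (by omega))) b) := by
  refine X.ext (X.H_mem ρ (SetLike.GradedMul.mul_mem ha hb)) ?_ ?_
  · refine sum_mem fun p _ => zsmul_mem ?_ _
    have h := SetLike.GradedMul.mul_mem
      (X.H_mem (ρ.comp (frontMap (p : ℕ) n (Nat.le_of_lt_succ p.isLt))) ha)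
      (X.H_mem (ρ.comp (backMap (n - (p : ℕ)) n (by omega))) hb)
    have e : i - ((p : ℕ) : ℤ) + (j - ((n - (p : ℕ) : ℕ) : ℤ)) = i + j - n := by
      have := p.isLt
      omega
    rw [e] at h
    exact h
  · intro m σ
    rw [E_H]
    refine (XX_mul (fun N τ => X.E N τ a) (fun N τ => X.E N τ b) _ j
      (fun n σ => X.mul i j a ha b hb n σ) ρ σ).trans ?_
    rw [map_sum]
    apply Finset.sum_congr rfl
    intro p _
    rw [map_zsmul, X.mul _ _ _ (X.H_mem _ ha) _ (X.H_mem _ hb), Finset.smul_sum]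
    apply Finset.sum_congr rfl
    intro r _
    rw [E_H, E_H]
    have e : ((n - (p : ℕ) : ℕ) : ℤ) = (n : ℤ) - ((p : ℕ) : ℤ) := by
      have := p.isLt
      omega
    rw [e]

lemma H_d0 (i : ℤ) (a) (ha : a ∈ T.gr i) (ρ : C(TopSimplex 0, unitInterval)) :
    X.H ρ (T.d a) = T.d (X.H ρ a) := by
  have h1 := X.H_mem ρ ha
  have h2 := X.H_mem ρ (T.d_mem i a ha)
  simp only [Nat.cast_zero, sub_zero] at h1 h2
  refine X.ext h2 (T.d_mem _ _ h1) ?_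
  intro m σ
  rw [E_H]
  refine (XX_d (fun N τ => X.E N τ a) _ A.d.toAddMonoidHom i (X.d0 i a ha)
    (X.d1 i a ha) ρ σ).trans ?_
  rw [D_left_zero]
  cases m with
  | zero =>
    rw [D_right_zero, X.d0 _ _ h1, E_H]
    simp
  | succ m =>
    rw [D_right_succ, X.d1 _ _ h1]
    simp only [E_H, smul_zero, add_zero]
    refine congrArg₂ (· + ·) rfl (congrArg₂ (· • ·) (sg_congr (-1) ?_) rfl)
    push_cast
    ring

lemma H_d1 (i : ℤ) (a) (ha : a ∈ T.gr i) (n : ℕ) (ρ : C(TopSimplex (n + 1), unitInterval)) :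
    X.H ρ (T.d a) = T.d (X.H ρ a) + sg (i - n) • ∑ i' : Fin (n + 2), sg (i' : ℕ) •
      X.H (ρ.comp (faceMap i')) a := by
  have h1 := X.H_mem ρ ha
  have h2 := X.H_mem ρ (T.d_mem i a ha)
  have e1 : i + 1 - ((n + 1 : ℕ) : ℤ) = i - n := by push_cast; ring
  have h3 := T.d_mem _ _ h1
  have e2 : i - ((n + 1 : ℕ) : ℤ) + 1 = i - n := by push_cast; ring
  rw [e1] at h2
  rw [e2] at h3
  refine X.ext h2 (add_mem h3 (zsmul_mem (sum_mem fun i' _ => zsmul_mem (X.H_mem _ ha) _) _)) ?_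
  intro m σ
  rw [E_H]
  refine (XX_d (fun N τ => X.E N τ a) _ A.d.toAddMonoidHom i (X.d0 i a ha)
    (X.d1 i a ha) ρ σ).trans ?_
  rw [D_left_succ, map_add, map_zsmul, map_sum, smul_add, smul_smul, ← sg_add]
  simp only [map_zsmul, E_H]
  have e3 : sg (i - (((n + 1 : ℕ) : ℤ) + m + 1) + m) = sg (i - n) :=
    sg_congr (-1) (by push_cast; ring)
  rw [e3, ← add_assoc]
  congr 1
  cases m with
  | zero =>
    rw [D_right_zero, X.d0 _ _ h1, E_H]
    simp
  | succ m =>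
    rw [D_right_succ, X.d1 _ _ h1]
    simp only [E_H]
    refine congrArg₂ (· + ·) rfl (congrArg₂ (· • ·) (sg_congr (-1) ?_) rfl)
    push_cast
    ring

lemma H_const1 (a : T.A) : X.H (ContinuousMap.const (TopSimplex 0) 1) a = a := by
  refine hom_ext (X.H (ContinuousMap.const (TopSimplex 0) 1)).toAddMonoidHom
    (AddMonoidHom.id _) ?_ a
  intro i y hy
  have h1 := X.H_mem (ContinuousMap.const (TopSimplex 0) 1) hy
  simp only [Nat.cast_zero, sub_zero] at h1
  refine X.ext h1 hy ?_
  intro m σ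
  exact (X.E_H _ _ _ _).trans (XX_const1 _ σ)

lemma H_const0 (f : DGAHom A T) (hf : ∀ y n σ, X.E n σ (f.toFun y) = cF A n σ y) (a : T.A) :
    X.H (ContinuousMap.const (TopSimplex 0) 0) a = f.toFun (X.g.toFun a) := by
  refine hom_ext (X.H (ContinuousMap.const (TopSimplex 0) 0)).toAddMonoidHom
    (f.comp X.g).toFun.toLinearMap.toAddMonoidHom ?_ a
  intro i y hy
  have h1 := X.H_mem (ContinuousMap.const (TopSimplex 0) 0) hy
  simp only [Nat.cast_zero, sub_zero] at h1
  refine X.ext h1 ((f.comp X.g).map_gr i y hy) ?_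
  intro m σ
  refine (X.E_H _ _ _ _).trans ?_
  refine Eq.trans ?_ (hf (X.g.toFun y) m σ).symm
  cases m with
  | zero => exact XX_const0_zero _ σ
  | succ m => exact XX_const0_succ _ (fun n i τ => X.degen y n i τ) σ

end CT

lemma DGAHom_ext {A B : DGA k} {f g : DGAHom A B} (h : ∀ a, f.toFun a = g.toFun a) : f = g := by
  cases f; cases g
  congr
  exact AlgHom.ext h

theorem main {A T : DGA k} (h : IsCochainTensorI A T) : StronglyHomotopyEquivalent A T := by
  obtain ⟨X⟩ := exists_CT h
  obtain ⟨f, hf⟩ := X.exists_f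
  refine ⟨f, X.g, ?_, ?_⟩
  · apply Relation.EqvGen.rel
    refine ⟨fun a n ρ => X.H (n := n) ρ a, ?_, ?_, ?_, ?_, ?_, ?_, ?_, ?_, ?_⟩
    · exact fun a b n σ => map_add _ _ _
    · exact fun c a n σ => map_smul _ _ _
    · exact X.H_degen
    · exact fun i a ha n σ => X.H_mem _ ha
    · exact X.H_one0
    · exact X.H_one1
    · exact X.H_mul
    · intro i a ha
      refine ⟨X.H_d0 i a ha, ?_⟩
      intro n σ
      have := X.H_d1 i a ha n σ
      simp only [sg_nat] at this
      exact this
    · exact fun a => ⟨X.H_const0 f hf a, X.H_const1 a⟩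
  · have : X.g.comp f = DGAHom.id' A := DGAHom_ext fun a => hf a 0 _
    rw [this]
    exact Relation.EqvGen.refl _

end
end EZ

/-- **Theorem.** Any dg algebra `A` over a commutative ring `k` is strongly homotopy
equivalent to `A ⊗ I*`, where `I*` is the normalized cochain dg algebra of the singular
simplicial set of `[0,1]` (stated for any dg algebra `T` realizing the completed tensor
product `A ⊗ I*`); in particular, `I*` is strongly homotopy equivalent to `k`. -/
theorem dga_strongly_homotopy_equivalent_to_tensor_with_I
    {k : Type} [CommRing k] :
    (∀ A T : DGA k, IsCochainTensorI A T → StronglyHomotopyEquivalent A T) ∧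
    (∀ J : DGA k, IsCochainTensorI (DGA.triv k) J →
      StronglyHomotopyEquivalent J (DGA.triv k)) := by
  exact ⟨fun A T h => EZ.main h, fun J h => by
    obtain ⟨f, g, h1, h2⟩ := EZ.main h
    exact ⟨g, f, h2, h1⟩⟩
end

section
/- The simplicial set K∞, the nerve of the groupoid with two objects and two mutually inverse morphisms between them, is a retract of I, the singular simplicial set of the interval [0,1]: the inclusion K∞ ↪ I admits a simplicial retraction. -/
open CategoryTheory Simplicial

/-- The simplicial set `K∞`: the nerve of the groupoid with two objects and two mutually
inverse morphisms between them.  Its `n`-simplices are vertex sequences, i.e. functions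
`Fin (n+1) → Bool`; its two nondegenerate `n`-simplices are the alternating sequences,
corresponding to the affine simplices of `[0,1]` sending the vertices alternately to `0`
and `1`. -/
def KInf : SSet where
  obj m := Fin (m.unop.len + 1) → Bool
  map f := ↾fun ε => ε ∘ f.unop.toOrderHom

/-- An `n`-simplex of the singular simplicial set of a topological space, viewed as a
continuous map from the topological `n`-simplex. -/
def appAsMap {X : TopCat} (ι : KInf ⟶ TopCat.toSSet.obj X) (n : ℕ)
    (ε : Fin (n + 1) → Bool) :
    SimplexCategory.toTop.obj (SimplexCategory.mk n) ⟶ X :=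
  (ι.app (Opposite.op (SimplexCategory.mk n)) ε).down

/-- The affine map with vertex values `ε`. -/
noncomputable def affMap (n : ℕ) (ε : Fin (n + 1) → Bool) :
    C(ULift.{0} (stdSimplex ℝ (Fin (n + 1))), unitInterval) where
  toFun w := ⟨∑ i : Fin (n + 1), if ε i then (w.down.1 i : ℝ) else 0, by
    refine ⟨Finset.sum_nonneg fun i _ => ?_, ?_⟩
    · split_ifs
      · exact w.down.2.1 i
      · exact le_rfl
    · rw [← w.down.2.2]
      refine Finset.sum_le_sum fun i _ => ?_
      split_ifs
      · exact le_rfl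
      · exact w.down.2.1 i⟩
  continuous_toFun := by
    refine Continuous.subtype_mk (continuous_finsetSum _ fun i _ => ?_) _
    split_ifs
    · exact (continuous_apply i).comp (continuous_subtype_val.comp continuous_uliftDown)
    · exact continuous_const

theorem affMap_map {m n : ℕ} (f : Fin (n + 1) → Fin (m + 1)) (ε : Fin (m + 1) → Bool)
    (w : stdSimplex ℝ (Fin (n + 1))) :
    affMap n (ε ∘ f) ⟨w⟩ = affMap m ε ⟨stdSimplex.map f w⟩ := by
  apply Subtype.ext
  change (∑ i, if ε (f i) then (w.1 i : ℝ) else 0) =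
    ∑ j, if ε j then (stdSimplex.map f w) j else 0
  simp only [stdSimplex.map_coe, FunOnFinite.linearMap_apply_apply]
  rw [← Finset.sum_fiberwise (g := f)]
  refine Finset.sum_congr rfl fun j _ => ?_
  have key : ∀ i ∈ Finset.univ.filter (fun i => f i = j),
      (if ε (f i) then (w.1 i : ℝ) else 0) = if ε j then (w.1 i : ℝ) else 0 := by
    intro i hi
    rw [(Finset.mem_filter.1 hi).2]
  rw [Finset.sum_congr rfl key]
  split_ifs
  · rfl
  · simp

theorem affMap_vertex (n : ℕ) (ε : Fin (n + 1) → Bool) (i : Fin (n + 1)) :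
    (affMap n ε ⟨stdSimplex.vertex i⟩).1 = if ε i then 1 else 0 := by
  change (∑ j, if ε j then (Pi.single i 1 : Fin (n + 1) → ℝ) j else 0) = _
  rw [Finset.sum_eq_single i]
  · simp
  · intro j _ hj
    simp [hj]
  · simp

/-- The inclusion. -/
noncomputable def inclK : KInf ⟶ TopCat.toSSet.obj (TopCat.of unitInterval) where
  app m := ↾fun ε => ULift.up (TopCat.ofHom (affMap m.unop.len ε))
  naturality m n f := by
    ext ε
    apply ULift.ext
    apply TopCat.hom_ext
    ext w
    exact congrArg Subtype.val (affMap_map f.unop.toOrderHom ε w.down)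

open Classical in
/-- The retraction: a singular simplex goes to the indicator of its vertices with value `1`. -/
noncomputable def retrK : TopCat.toSSet.obj (TopCat.of unitInterval) ⟶ KInf where
  app m := ↾fun σ => fun i => decide ((σ.down.hom ⟨stdSimplex.vertex i⟩ : unitInterval) = 1)
  naturality m n f := by
    ext σ
    funext i
    change decide ((σ.down.hom ⟨stdSimplex.map f.unop.toOrderHom (stdSimplex.vertex i)⟩ :
      unitInterval) = 1) = decide ((σ.down.hom ⟨stdSimplex.vertex (f.unop.toOrderHom i)⟩ :
      unitInterval) = 1)
    rw [stdSimplex.map_vertex]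

/-- **Theorem.** The simplicial set `K∞` (the nerve of the groupoid with two objects and
two mutually inverse morphisms) is a retract of `I`, the singular simplicial set of the
interval `[0,1]`: the inclusion `K∞ ↪ I` (sending a vertex sequence `ε` to the affine
singular simplex with vertex values `ε`) admits a simplicial retraction. -/
theorem kinf_is_retract_of_singular_interval :
    ∃ (ι : KInf ⟶ TopCat.toSSet.obj (TopCat.of unitInterval))
      (r : TopCat.toSSet.obj (TopCat.of unitInterval) ⟶ KInf),
      (∀ (n : ℕ) (ε : Fin (n + 1) → Bool)
        (w : SimplexCategory.toTop.{0}.obj (SimplexCategory.mk n)),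
        (appAsMap ι n ε w).1 =
          ∑ i : Fin (n + 1), if ε i then (w.down.1 i : ℝ) else 0) ∧
      ι ≫ r = 𝟙 KInf := by
  refine ⟨inclK, retrK, fun n ε w => rfl, ?_⟩
  ext m ε
  funext i
  classical
  change decide (affMap m.unop.len ε ⟨stdSimplex.vertex i⟩ = 1) = ε i
  have h := affMap_vertex m.unop.len ε i
  cases hε : ε i
  · rw [hε] at h
    simp only [decide_eq_false_iff_not]
    intro h1
    rw [h1] at h
    simp at h
  · rw [hε] at h
    simp only [decide_eq_true_eq]
    exact Subtype.ext (by simpa using h)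
end
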